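/- arXiv:1901.04922 — 5 statements merged into one kernel-verified Lean document; each statement's English description precedes it below -/
import Mathlib

section
/- Let m = 2. If there is an infinite run of the p-adic Jacobi–Perron algorithm with complete quotients α_n^{(1)}, α_n^{(2)} and partial quotients a_n^{(1)}, a_n^{(2)} such that 1, α_0^{(1)}, α_0^{(2)} are linearly dependent over ℚ, then v_p(a_n^{(1)}) = −1 for infinitely many n ∈ ℕ (v_p being the p-adic valuation on ℚ). -/
open Finset Filter

/-- `q` belongs to `ℤ[1/p]`. -/
def InZInvP (p : ℕ) (q : ℚ) : Prop := ∃ (z : ℤ) (k : ℕ), q = (z : ℚ) / (p : ℚ) ^ k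

/-- `a` is the Browkin `s`-function value of `x`:
`a ∈ ℤ[1/p]`, `|a|_∞ < p/2` and `|x - a|_p < 1`. -/
def IsSValue (p : ℕ) [Fact p.Prime] (x : ℚ_[p]) (a : ℚ) : Prop :=
  InZInvP p a ∧ |a| < (p : ℚ) / 2 ∧ ‖x - (a : ℚ_[p])‖ < 1

/-- An infinite run of the `p`-adic Jacobi–Perron algorithm with complete quotients
`α n i` and partial quotients `a n i` (`n ≥ 0`, `i = 1,…,m`). -/
def JPRun (p : ℕ) [Fact p.Prime] (m : ℕ) (α : ℕ → ℕ → ℚ_[p]) (a : ℕ → ℕ → ℚ) : Prop :=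
  ∀ n : ℕ,
    (∀ i ∈ Finset.Icc 1 m, IsSValue p (α n i) (a n i)) ∧
    α n m ≠ ((a n m : ℚ) : ℚ_[p]) ∧
    α (n + 1) 1 = (α n m - ((a n m : ℚ) : ℚ_[p]))⁻¹ ∧
    ∀ i ∈ Finset.Icc 2 m,
      α (n + 1) i = (α n (i - 1) - ((a n (i - 1) : ℚ) : ℚ_[p])) / (α n m - ((a n m : ℚ) : ℚ_[p]))

/-- `A : ℤ → ℕ → ℚ` is the family of convergent numerators/denominators attached to the
partial quotients `a`: `A (-j) i = δ_{ij}` for `j = 1,…,m+1`, and for `n ≥ 0`,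
`A n i = Σ_{j=1}^m a n j * A (n-j) i + A (n-m-1) i`. -/
def JPConv (m : ℕ) (a : ℕ → ℕ → ℚ) (A : ℤ → ℕ → ℚ) : Prop :=
  (∀ i ∈ Finset.Icc 1 (m + 1), ∀ j ∈ Finset.Icc 1 (m + 1),
      A (-(j : ℤ)) i = if i = j then 1 else 0) ∧
  (∀ n : ℕ, ∀ i ∈ Finset.Icc 1 (m + 1),
      A n i = (∑ j ∈ Finset.Icc 1 m, a n j * A ((n : ℤ) - j) i) + A ((n : ℤ) - m - 1) i)

/-!
A rational linear relation between `1, α₀⁽¹⁾, …, α₀⁽ᵐ⁾` is carried along by the algorithm: its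
coefficients at successive steps are consecutive terms of one sequence `u` obeying the recurrence of
the convergents. After clearing denominators, `u` lies in `ℤ[1/p]`, and `|aₙ⁽ⁱ⁾|_∞ < p/2` gives
`|uₙ|_∞ = O(rⁿ)` for some `r < p`. If `|αₙ⁽ⁱ⁾ - aₙ⁽ⁱ⁾|_p ≤ p⁻ⁱ` held for all `i` and all large `n`,
then `|uₙ|_p = O(p⁻ⁿ)`, so `|uₙ|_p |uₙ|_∞ → 0`. This product is at least `1` at a nonzero
element of `ℤ[1/p]`, so `u` would vanish eventually, hence identically, as the recurrence can be run
backwards. So `|αₙ⁽ⁱ⁾ - aₙ⁽ⁱ⁾|_p > p⁻ⁱ` infinitely often for some `i`. For `m = 2` only `i = 2` is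
possible, and then `|aₙ₊₁⁽¹⁾|_p = |αₙ⁽²⁾ - aₙ⁽²⁾|_p⁻¹` lies strictly between `1` and `p²`.
-/

open Asymptotics

theorem isBigO_pow_of_forall_window {E : Type*} [SeminormedAddCommGroup E] {u : ℕ → E} {r : ℝ}
    (hr : 0 < r) (k : ℕ)
    (hstep : ∀ᶠ n in atTop, ∀ K : ℝ, 0 ≤ K →
      (∀ i < k, ‖u (n + i)‖ ≤ K * r ^ (n + i)) → ‖u (n + k)‖ ≤ K * r ^ (n + k)) :
    u =O[atTop] (fun n ↦ r ^ n) := by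
  obtain ⟨N, hN⟩ := eventually_atTop.1 hstep
  set K : ℝ := ∑ i ∈ range k, ‖u (N + i)‖ / r ^ (N + i)
  have hK0 : 0 ≤ K := sum_nonneg fun i _ ↦ by positivity
  have hbound : ∀ n, ‖u (N + n)‖ ≤ K * r ^ (N + n) := by
    intro n
    induction n using Nat.strong_induction_on with
    | _ n ih =>
      obtain hn | hn := lt_or_ge n k
      · rw [← div_le_iff₀ (by positivity)]
        exact single_le_sum (f := fun i ↦ ‖u (N + i)‖ / r ^ (N + i))
          (fun i _ ↦ by positivity) (mem_range.2 hn)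
      · obtain ⟨l, rfl⟩ := Nat.exists_eq_add_of_le' hn
        rw [← add_assoc]
        refine hN (N + l) (by omega) K hK0 fun i hi ↦ ?_
        rw [add_assoc]
        exact ih (l + i) (by omega)
  refine IsBigO.of_bound K (eventually_atTop.2 ⟨N, fun n hn ↦ ?_⟩)
  obtain ⟨l, rfl⟩ := Nat.exists_eq_add_of_le hn
  rw [Real.norm_of_nonneg (by positivity)]
  exact hbound l

section Recurrence

variable {R : Type*} {m : ℕ} {a : ℕ → ℕ → R} {u : ℕ → R}

/-- `u` obeys the Jacobi–Perron recurrence `uₙ₊ₘ₊₁ = ∑ⱼ₌₁ᵐ aₙ⁽ʲ⁾ uₙ₊ₘ₊₁₋ⱼ + uₙ` with partial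
quotients `a n j`, summed over `i = j - 1`. This is the recurrence of the convergents with the index
shifted by `m + 1`. -/
def IsJPRecurrence [Semiring R] (m : ℕ) (a : ℕ → ℕ → R) (u : ℕ → R) : Prop :=
  ∀ n, u (n + m + 1) = ∑ i ∈ range m, a n (i + 1) * u (n + (m - i)) + u n

theorem exists_isJPRecurrence [Semiring R] (m : ℕ) (a : ℕ → ℕ → R) (v : ℕ → R) :
    ∃ u, IsJPRecurrence m a u ∧ ∀ i ≤ m, u i = v i := by
  -- `w n` is the window `uₙ, …, uₙ₊ₘ`, and each step is that of a shift register.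
  let w : ℕ → ℕ → R := fun n ↦ n.rec v fun n t i ↦
    if i < m then t (i + 1) else ∑ j ∈ range m, a n (j + 1) * t (m - j) + t 0
  have w_shift : ∀ i ≤ m, ∀ n, w n i = w (n + i) 0 := by
    intro i
    induction i with
    | zero => simp
    | succ i ih =>
      intro hi n
      have hstep : w (n + 1) i = w n (i + 1) := if_pos hi
      rw [← hstep, ih (by omega) (n + 1), add_right_comm, add_assoc]
  refine ⟨fun n ↦ w n 0, fun n ↦ ?_, fun i hi ↦ ?_⟩
  · have hstep : w (n + 1) m = ∑ j ∈ range m, a n (j + 1) * w n (m - j) + w n 0 :=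
      if_neg (lt_irrefl m)
    beta_reduce
    rw [add_right_comm, ← w_shift m le_rfl, hstep]
    simp only [w_shift _ (Nat.sub_le m _)]
  · have hinit : w 0 i = v i := rfl
    rw [← hinit, w_shift i hi 0, zero_add]

namespace IsJPRecurrence

theorem mem_of_forall_le [Semiring R] {T : Subsemiring R} (hu : IsJPRecurrence m a u)
    (ha : ∀ n, ∀ i < m, a n (i + 1) ∈ T) (h0 : ∀ i ≤ m, u i ∈ T) (n : ℕ) : u n ∈ T := by
  induction n using Nat.strong_induction_on with
  | _ n ih =>
    obtain hn | hn := le_or_gt n m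
    · exact h0 n hn
    · obtain ⟨l, rfl⟩ := Nat.exists_eq_add_of_lt hn
      rw [add_comm m l, hu l]
      refine add_mem (sum_mem fun i hi ↦ ?_) (ih l (by omega))
      exact mul_mem (ha l i (mem_range.1 hi)) (ih _ (by omega))

theorem eq_zero_of_eventually_eq_zero [Semiring R] (hu : IsJPRecurrence m a u)
    (h : ∀ᶠ n in atTop, u n = 0) (n : ℕ) : u n = 0 := by
  obtain ⟨N, hN⟩ := eventually_atTop.1 h
  induction N with
  | zero => exact hN n n.zero_le
  | succ N ih =>
    refine ih fun l hl ↦ ?_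
    obtain rfl | hl := hl.eq_or_lt
    · have hsum : ∑ i ∈ range m, a N (i + 1) * u (N + (m - i)) = 0 :=
        sum_eq_zero fun i hi ↦ by
          have := mem_range.1 hi
          rw [hN _ (by omega), mul_zero]
      simpa [hsum, hN (N + m + 1) (by omega)] using (hu N).symm
    · exact hN l hl

theorem ratCast_eq_neg_sum_sub_mul {K : Type*} [Field K] [CharZero K] {a : ℕ → ℕ → ℚ} {u : ℕ → ℚ}
    (hu : IsJPRecurrence m a u) {n : ℕ} {x : ℕ → K}
    (hrel : ∑ i ∈ range m, x (i + 1) * u (n + (m - i)) + u n = 0) :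
    (u (n + m + 1) : K) = -∑ i ∈ range m, (x (i + 1) - a n (i + 1)) * u (n + (m - i)) := by
  simp only [hu n, Rat.cast_add, Rat.cast_sum, Rat.cast_mul, sub_mul, sum_sub_distrib]
  linear_combination hrel

theorem isBigO_pow [SeminormedRing R] {B r : ℝ} (hu : IsJPRecurrence m a u)
    (ha : ∀ n, ∀ i < m, ‖a n (i + 1)‖ ≤ B) (hr : 0 < r)
    (hBr : B * ∑ i ∈ range m, r ^ (m - i) + 1 ≤ r ^ (m + 1)) :
    u =O[atTop] (fun n ↦ r ^ n) := by
  refine isBigO_pow_of_forall_window hr (m + 1) (.of_forall fun n K hK hwin ↦ ?_)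
  have hterm : ∀ i ∈ range m,
      ‖a n (i + 1) * u (n + (m - i))‖ ≤ B * (K * r ^ (n + (m - i))) := fun i hi ↦
    norm_mul_le_of_le (ha n i (mem_range.1 hi)) (hwin _ (by omega))
  calc ‖u (n + (m + 1))‖
      = ‖∑ i ∈ range m, a n (i + 1) * u (n + (m - i)) + u n‖ := by rw [← add_assoc, hu n]
    _ ≤ ∑ i ∈ range m, B * (K * r ^ (n + (m - i))) + K * r ^ n :=
        norm_add_le_of_le (norm_sum_le_of_le _ hterm) (hwin 0 m.succ_pos)
    _ = K * r ^ n * (B * ∑ i ∈ range m, r ^ (m - i) + 1) := by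
        simp only [pow_add, mul_add, mul_sum, mul_one]
        exact congrArg (· + _) (sum_congr rfl fun i _ ↦ by ring)
    _ ≤ K * r ^ n * r ^ (m + 1) := by gcongr
    _ = K * r ^ (n + (m + 1)) := by ring

end IsJPRecurrence

theorem isBigO_pow_of_eq_neg_sum [SeminormedRing R] [IsUltrametricDist R] {r : ℝ} (hr : 0 < r)
    {ε : ℕ → ℕ → R} (hε : ∀ᶠ n in atTop, ∀ i < m, ‖ε n (i + 1)‖ ≤ r ^ (i + 1))
    (hu : ∀ n, u (n + m + 1) = -∑ i ∈ range m, ε n (i + 1) * u (n + (m - i))) :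
    u =O[atTop] (fun n ↦ r ^ n) := by
  refine isBigO_pow_of_forall_window hr (m + 1) (hε.mono fun n hεn K hK hwin ↦ ?_)
  rw [← add_assoc, hu n, norm_neg]
  refine IsUltrametricDist.norm_sum_le_of_forall_le_of_nonneg (by positivity) fun i hi ↦ ?_
  have him : i < m := mem_range.1 hi
  calc ‖ε n (i + 1) * u (n + (m - i))‖
      ≤ r ^ (i + 1) * (K * r ^ (n + (m - i))) := norm_mul_le_of_le (hεn i him) (hwin _ (by omega))
    _ = K * r ^ (i + 1 + (n + (m - i))) := by ring
    _ = K * r ^ (n + m + 1) := by congr 2; omega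

end Recurrence

theorem half_mul_sum_pow_add_one_lt {x : ℝ} (hx : 2 ≤ x) (m : ℕ) :
    x / 2 * ∑ i ∈ range m, x ^ (m - i) + 1 < x ^ (m + 1) := by
  induction m with
  | zero => simpa using by linarith
  | succ m ih =>
    simp only [sum_range_succ', Nat.add_sub_add_right, Nat.sub_zero]
    calc x / 2 * (∑ i ∈ range m, x ^ (m - i) + x ^ (m + 1)) + 1
        < x ^ (m + 1) * (x / 2 + 1) := by linarith
      _ ≤ x ^ (m + 1) * x := by gcongr; linarith
      _ = x ^ (m + 1 + 1) := (pow_succ _ _).symm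

theorem exists_lt_half_mul_sum_pow_add_one_le {x : ℝ} (hx : 2 ≤ x) (m : ℕ) :
    ∃ r, 0 < r ∧ r < x ∧ x / 2 * ∑ i ∈ range m, r ^ (m - i) + 1 ≤ r ^ (m + 1) := by
  have hcont : Continuous fun r : ℝ ↦ x / 2 * ∑ i ∈ range m, r ^ (m - i) + 1 := by fun_prop
  have hlt := hcont.continuousAt.eventually_lt (continuous_pow (m + 1)).continuousAt
    (half_mul_sum_pow_add_one_lt hx m)
  have hIoo : Set.Ioo 0 x ∈ nhdsWithin x (Set.Iio x) := Ioo_mem_nhdsLT (by linarith)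
  obtain ⟨r, hr, hr0, hrx⟩ := ((hlt.filter_mono nhdsWithin_le_nhds).and hIoo).exists
  exact ⟨r, hr0, hrx, hr.le⟩

/-- The subsemiring `ℤ[1/p]` of `ℚ`, whose membership predicate is `InZInvP p`. -/
def zInvP (p : ℕ) [NeZero p] : Subsemiring ℚ where
  carrier := {q | InZInvP p q}
  zero_mem' := ⟨0, 0, by simp⟩
  one_mem' := ⟨1, 0, by simp⟩
  add_mem' := by
    rintro _ _ ⟨z, k, rfl⟩ ⟨w, l, rfl⟩
    have hp : (p : ℚ) ≠ 0 := NeZero.ne _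
    refine ⟨z * p ^ l + w * p ^ k, k + l, ?_⟩
    rw [div_add_div _ _ (pow_ne_zero k hp) (pow_ne_zero l hp), pow_add]
    push_cast
    ring
  mul_mem' := by
    rintro _ _ ⟨z, k, rfl⟩ ⟨w, l, rfl⟩
    exact ⟨z * w, k + l, by rw [div_mul_div_comm, pow_add, Int.cast_mul]⟩

section

variable {p : ℕ} [hp : Fact p.Prime]

theorem one_le_norm_padic_mul_norm_intCast {z : ℤ} (hz : z ≠ 0) : 1 ≤ ‖(z : ℚ_[p])‖ * ‖z‖ := by
  have hp0 : (0 : ℝ) < p := mod_cast hp.out.pos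
  have hdvd : (p : ℤ) ^ padicValInt p z ≤ |z| :=
    Int.le_of_dvd (abs_pos.2 hz) ((dvd_abs _ _).2 (padicValInt_dvd z))
  rw [Padic.norm_eq_zpow_neg_valuation (mod_cast hz), Padic.valuation_intCast, Int.norm_eq_abs,
    zpow_neg, zpow_natCast, inv_mul_eq_div, one_le_div (by positivity)]
  exact_mod_cast hdvd

theorem InZInvP.one_le_norm_padic_mul_norm {q : ℚ} (hq : InZInvP p q) (hq0 : q ≠ 0) :
    1 ≤ ‖(q : ℚ_[p])‖ * ‖q‖ := by
  obtain ⟨z, k, rfl⟩ := hq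
  have hp0 : (0 : ℝ) < p := mod_cast hp.out.pos
  have hz : z ≠ 0 := by rintro rfl; simp at hq0
  have hnorm_p : ‖(p : ℚ)‖ = p := by
    rw [← Rat.norm_cast_real, Rat.cast_natCast, Real.norm_natCast]
  have hcancel : ‖((z / p ^ k : ℚ) : ℚ_[p])‖ * ‖(z / p ^ k : ℚ)‖ = ‖(z : ℚ_[p])‖ * ‖z‖ := by
    push_cast
    rw [norm_div, norm_div, norm_pow, norm_pow, Padic.norm_p, inv_pow, div_inv_eq_mul,
      Int.norm_cast_rat, hnorm_p]
    field_simp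
  exact hcancel ▸ one_le_norm_padic_mul_norm_intCast hz

theorem norm_padic_le_inv_of_lt_one {x : ℚ_[p]} (hx : ‖x‖ < 1) : ‖x‖ ≤ (p : ℝ)⁻¹ := by
  simpa using (Padic.norm_le_pow_iff_norm_lt_pow_add_one x (-1)).2 (by simpa using hx)

theorem padicValRat_eq_neg_one_of_norm_mem_Ioo {q : ℚ}
    (hq : ‖(q : ℚ_[p])‖ ∈ Set.Ioo 1 ((p : ℝ) ^ 2)) : padicValRat p q = -1 := by
  have hp1 : (1 : ℝ) < p := mod_cast hp.out.one_lt
  have hq0 : (q : ℚ_[p]) ≠ 0 := norm_pos_iff.1 (one_pos.trans hq.1)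
  rw [Padic.norm_eq_zpow_neg_valuation hq0, Padic.valuation_ratCast, Set.mem_Ioo,
    one_lt_zpow_iff_right₀ hp1, ← zpow_natCast, zpow_lt_zpow_iff_right₀ hp1] at hq
  omega

namespace JPRun

variable {m : ℕ} {α : ℕ → ℕ → ℚ_[p]} {a : ℕ → ℕ → ℚ}

theorem isSValue (hrun : JPRun p m α a) (n : ℕ) {i : ℕ} (hi : i < m) :
    IsSValue p (α n (i + 1)) (a n (i + 1)) :=
  (hrun n).1 (i + 1) (by simpa using hi)

theorem norm_sub_le_inv (hrun : JPRun p m α a) {n i : ℕ} (hi : i < m) :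
    ‖α n (i + 1) - a n (i + 1)‖ ≤ (p : ℝ)⁻¹ :=
  norm_padic_le_inv_of_lt_one (hrun.isSValue n hi).2.2

theorem norm_le_half (hrun : JPRun p m α a) (n : ℕ) {i : ℕ} (hi : i < m) :
    ‖a n (i + 1)‖ ≤ (p : ℝ) / 2 := by
  rw [← Rat.norm_cast_real, Real.norm_eq_abs]
  have hle := (Rat.cast_le (K := ℝ)).2 (hrun.isSValue n hi).2.1.le
  push_cast at hle
  exact hle

theorem norm_sub_mem_Ioo (hrun : JPRun p m α a) (hm : 1 ≤ m) (n : ℕ) :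
    ‖α n m - a n m‖ ∈ Set.Ioo 0 1 :=
  ⟨norm_pos_iff.2 (sub_ne_zero.2 (hrun n).2.1), ((hrun n).1 m (right_mem_Icc.2 hm)).2.2⟩

theorem norm_succ_one (hrun : JPRun p m α a) (hm : 1 ≤ m) (n : ℕ) :
    ‖(a (n + 1) 1 : ℚ_[p])‖ = ‖α n m - a n m‖⁻¹ := by
  obtain ⟨hpos, hlt⟩ := hrun.norm_sub_mem_Ioo hm n
  have hα : ‖α (n + 1) 1‖ = ‖α n m - a n m‖⁻¹ := by rw [(hrun n).2.2.1, norm_inv]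
  have hα1 : 1 < ‖α (n + 1) 1‖ := hα ▸ (one_lt_inv₀ hpos).2 hlt
  rw [← hα, Padic.norm_eq_of_norm_sub_lt_left ((hrun.isSValue (n + 1) hm).2.2.trans hα1)]

theorem padicValRat_succ_one_eq_neg_one (hrun : JPRun p m α a) (hm : 1 ≤ m) {n : ℕ}
    (hlt : (p : ℝ)⁻¹ ^ 2 < ‖α n m - a n m‖) : padicValRat p (a (n + 1) 1) = -1 := by
  have hp0 : (0 : ℝ) < p := mod_cast hp.out.pos
  obtain ⟨hpos, hlt1⟩ := hrun.norm_sub_mem_Ioo hm n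
  refine padicValRat_eq_neg_one_of_norm_mem_Ioo ?_
  rw [hrun.norm_succ_one hm]
  exact ⟨(one_lt_inv₀ hpos).2 hlt1, inv_lt_of_inv_lt₀ (by positivity) (by rwa [← inv_pow])⟩

theorem relation_of_relation_zero (hrun : JPRun p m α a) {u : ℕ → ℚ} (hu : IsJPRecurrence m a u)
    (h0 : ∑ i ∈ range m, α 0 (i + 1) * u (m - i) + u 0 = 0) (n : ℕ) :
    ∑ i ∈ range m, α n (i + 1) * u (n + (m - i)) + u n = 0 := by
  induction n with
  | zero => simpa using h0
  | succ n ih =>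
    have hrec := hu.ratCast_eq_neg_sum_sub_mul ih
    obtain _ | m := m
    · simpa using hrec
    obtain ⟨-, hne, hfirst, hnext⟩ := hrun n
    have hδ : α n (m + 1) - a n (m + 1) ≠ 0 := sub_ne_zero.2 hne
    have hshift : ∀ i ∈ range m, α (n + 1) (i + 1 + 1) * u (n + 1 + (m + 1 - (i + 1))) =
        (α n (i + 1) - a n (i + 1)) * u (n + (m + 1 - i)) / (α n (m + 1) - a n (m + 1)) := by
      intro i hi
      have him : i < m := mem_range.1 hi
      rw [hnext (i + 1 + 1) (mem_Icc.2 ⟨by omega, by omega⟩), Nat.add_sub_cancel,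
        div_mul_eq_mul_div,
        show n + 1 + (m + 1 - (i + 1)) = n + (m + 1 - i) by omega]
    rw [sum_range_succ, show n + (m + 1 - m) = n + 1 by omega] at hrec
    rw [sum_range_succ', sum_congr rfl hshift, zero_add, hfirst, ← sum_div, Nat.sub_zero,
      show n + 1 + (m + 1) = n + (m + 1) + 1 by omega]
    field_simp
    linear_combination hrec

theorem exists_relation_sequence (hrun : JPRun p m α a) {x : ℕ → ℚ}
    (hx : ∃ i ≤ m, x (i + 1) ≠ 0)
    (hrel : ∑ i ∈ range m, (x (i + 1) : ℚ_[p]) * α 0 (i + 1) + x (m + 1) = 0) :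
    ∃ u : ℕ → ℚ, IsJPRecurrence m a u ∧ (∃ n, u n ≠ 0) ∧ (∀ n, InZInvP p (u n)) ∧
      ∀ n, ∑ i ∈ range m, α n (i + 1) * u (n + (m - i)) + u n = 0 := by
  obtain ⟨⟨d, hd⟩, hint⟩ := IsLocalization.exist_integer_multiples (nonZeroDivisors ℤ)
    (range (m + 1)) fun i ↦ x (i + 1)
  have hd0 : (d : ℚ) ≠ 0 := mod_cast nonZeroDivisors.ne_zero hd
  obtain ⟨u, hu, hinit⟩ := exists_isJPRecurrence m a fun i ↦ d * x (m - i + 1)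
  have hreverse : ∀ i ≤ m, u (m - i) = d * x (i + 1) := fun i hi ↦ by
    rw [hinit _ (m.sub_le i), Nat.sub_sub_self hi]
  refine ⟨u, hu, ?_, hu.mem_of_forall_le (T := zInvP p)
    (fun n i hi ↦ (hrun.isSValue n hi).1) fun i hi ↦ ?_, hrun.relation_of_relation_zero hu ?_⟩
  · obtain ⟨i, hi, hxi⟩ := hx
    exact ⟨m - i, by rw [hreverse i hi]; exact mul_ne_zero hd0 hxi⟩
  · obtain ⟨z, hz⟩ := hint (m - i) (mem_range.2 (by omega))
    exact ⟨z, 0, by simpa [hinit i hi] using hz.symm⟩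
  · have h0 : u 0 = d * x (m + 1) := by simpa using hreverse m le_rfl
    have hterm : ∀ i ∈ range m,
        α 0 (i + 1) * u (m - i) = d * ((x (i + 1) : ℚ_[p]) * α 0 (i + 1)) := fun i hi ↦ by
      rw [hreverse i (mem_range.1 hi).le]
      push_cast
      ring
    rw [sum_congr rfl hterm, ← mul_sum, h0, Rat.cast_mul, Rat.cast_intCast, ← mul_add, hrel,
      mul_zero]

theorem frequently_pow_lt_norm_sub (hrun : JPRun p m α a) {x : ℕ → ℚ}
    (hx : ∃ i ≤ m, x (i + 1) ≠ 0)
    (hrel : ∑ i ∈ range m, (x (i + 1) : ℚ_[p]) * α 0 (i + 1) + x (m + 1) = 0) :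
    ∃ᶠ n in atTop, ∃ i < m, (p : ℝ)⁻¹ ^ (i + 1) < ‖α n (i + 1) - a n (i + 1)‖ := by
  have hp0 : (0 : ℝ) < p := mod_cast hp.out.pos
  obtain ⟨u, hu, ⟨k, hk⟩, hmem, hform⟩ := hrun.exists_relation_sequence hx hrel
  by_contra hsmall
  simp only [not_frequently, not_exists, not_and, not_lt] at hsmall
  have hpadic : (fun n ↦ (u n : ℚ_[p])) =O[atTop] fun n ↦ (p : ℝ)⁻¹ ^ n :=
    isBigO_pow_of_eq_neg_sum (ε := fun n i ↦ α n i - a n i) (inv_pos.2 hp0) hsmall fun n ↦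
      hu.ratCast_eq_neg_sum_sub_mul (hform n)
  obtain ⟨r, hr0, hrp, hr⟩ :=
    exists_lt_half_mul_sum_pow_add_one_le (x := p) (mod_cast hp.out.two_le) m
  have harch : u =O[atTop] fun n ↦ r ^ n :=
    hu.isBigO_pow (fun n i hi ↦ hrun.norm_le_half n hi) hr0 hr
  have hprod : Tendsto (fun n ↦ ‖(u n : ℚ_[p])‖ * ‖u n‖) atTop (nhds 0) := by
    refine (hpadic.norm_left.mul harch.norm_left).trans_tendsto ?_
    simp only [← mul_pow]
    exact tendsto_pow_atTop_nhds_zero_of_lt_one (by positivity)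
      (by rwa [inv_mul_lt_one₀ hp0])
  have hzero : ∀ᶠ n in atTop, u n = 0 :=
    (hprod.eventually_lt_const one_pos).mono fun n hn ↦
      by_contra fun hne ↦ hn.not_ge ((hmem n).one_le_norm_padic_mul_norm hne)
  exact hk (hu.eq_zero_of_eventually_eq_zero hzero k)

end JPRun

end

theorem jacobiPerron_dim_two_valuation_general (p : ℕ) [Fact p.Prime]
    (α : ℕ → ℕ → ℚ_[p]) (a : ℕ → ℕ → ℚ) (hrun : JPRun p 2 α a)
    (hdep : ∃ x : ℕ → ℚ, (∃ i ∈ Finset.Icc 1 3, x i ≠ 0) ∧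
      ((x 1 : ℚ) : ℚ_[p]) * α 0 1 + ((x 2 : ℚ) : ℚ_[p]) * α 0 2 + ((x 3 : ℚ) : ℚ_[p]) = 0) :
    {n : ℕ | padicValRat p (a n 1) = -1}.Infinite := by
  obtain ⟨x, ⟨i, hi, hxi⟩, hrel⟩ := hdep
  have hx : ∃ i ≤ 2, x (i + 1) ≠ 0 := by
    obtain ⟨hi1, hi3⟩ := Finset.mem_Icc.1 hi
    exact ⟨i - 1, by omega, by rwa [Nat.sub_add_cancel hi1]⟩
  have hfreq := hrun.frequently_pow_lt_norm_sub hx (by simpa [sum_range_succ] using hrel)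
  refine Nat.frequently_atTop_iff_infinite.1 ((tendsto_add_atTop_nat 1).frequently ?_)
  refine hfreq.mono fun n ⟨i, hi, hlt⟩ ↦ hrun.padicValRat_succ_one_eq_neg_one one_le_two ?_
  obtain rfl | rfl : i = 0 ∨ i = 1 := by omega
  · rw [zero_add, pow_one] at hlt
    exact absurd hlt (hrun.norm_sub_le_inv (by simp)).not_gt
  · exact hlt

/-- For `m = 2`: if there is an infinite run of the `p`-adic Jacobi–Perron
algorithm such that `1, α₀⁽¹⁾, α₀⁽²⁾` are `ℚ`-linearly dependent, then `v_p(aₙ⁽¹⁾) = -1`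
for infinitely many `n`. -/
theorem jacobiPerron_dim_two_valuation (p : ℕ) [hp : Fact p.Prime] (hp2 : 2 < p)
    (α : ℕ → ℕ → ℚ_[p]) (a : ℕ → ℕ → ℚ)
    (hrun : JPRun p 2 α a)
    (hdep : ∃ x : ℕ → ℚ, (∃ i ∈ Finset.Icc 1 3, x i ≠ 0) ∧
      ((x 1 : ℚ) : ℚ_[p]) * α 0 1 + ((x 2 : ℚ) : ℚ_[p]) * α 0 2 + ((x 3 : ℚ) : ℚ_[p]) = 0) :
    {n : ℕ | padicValRat p (a n 1) = -1}.Infinite :=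
  jacobiPerron_dim_two_valuation_general p α a hrun hdep
end

section
/- For a purely periodic run of the p-adic Jacobi–Perron algorithm with period N, the matrix 𝓜, regarded as a matrix over ℚ_p, satisfies 𝓜 · v = μ · v, where v = (α_0^{(1)}, …, α_0^{(m)}, 1)^T ∈ ℚ_p^{m+1} and μ = α_0^{(1)} α_1^{(1)} ⋯ α_{N-1}^{(1)}; in particular μ is a root of the characteristic polynomial P(X), i.e. P(μ) = 0 in ℚ_p. -/
open Finset Filter

/-!
Let `C_n` be the matrix whose first column is `(a_n^{(1)}, …, a_n^{(m)}, 1)` and whose other columns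
are `e_1, …, e_m`, and let `x_n = (α_n^{(1)}, …, α_n^{(m)}, 1)`. The algorithm says
`C_n x_{n+1} = α_{n+1}^{(1)} x_n`, and the recurrence for the convergents says that
`𝓜_n = C_0 ⋯ C_{n-1}`. Hence `𝓜_n x_n = (α_1^{(1)} ⋯ α_n^{(1)}) x_0`, and periodicity
turns this into an eigenvector equation. Since `x_0` has an entry `1`, Cayley–Hamilton
then shows that the eigenvalue is a root of the characteristic polynomial.
-/

/-- The transition matrix of one Jacobi–Perron step with partial quotients `a`: its first column
is `a`, and each later column `j + 1` is the standard basis vector `e_j`. -/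
def jacobiPerronMatrix {R : Type*} [Zero R] [One R] {m : ℕ} (a : Fin (m + 1) → R) :
    Matrix (Fin (m + 1)) (Fin (m + 1)) R :=
  Matrix.of fun i ↦ Fin.cons (a i) fun j ↦ if i = j.castSucc then 1 else 0

/-- The matrix `𝓜` after `n` steps, whose columns are the convergents
`A_{n-1}, …, A_{n-m-1}`. -/
def convergentMatrix {R : Type*} {m : ℕ} (A : ℤ → Fin (m + 1) → R) (n : ℕ) :
    Matrix (Fin (m + 1)) (Fin (m + 1)) R :=
  Matrix.of fun i j ↦ A ((n : ℤ) - ((j : ℕ) + 1)) i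

/-- `A` is the family of convergents of the partial quotients `a`. Upper indices start at `0`,
and the last entry of `a n` plays the role of `a_n^{(m+1)}`. -/
structure IsJacobiPerronConvergents {R : Type*} [CommSemiring R] {m : ℕ}
    (a : ℕ → Fin (m + 1) → R) (A : ℤ → Fin (m + 1) → R) : Prop where
  initial : ∀ i j : Fin (m + 1), A (-((j : ℕ) + 1)) i = if i = j then 1 else 0
  recurrence : ∀ (n : ℕ) (i : Fin (m + 1)), A n i = ∑ j, a n j * A ((n : ℤ) - ((j : ℕ) + 1)) i

/-- `a n` are the partial quotients and `x n` the complete quotients of a Jacobi–Perron expansion,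
both extended by a last entry `1`; any choice of the `a n` is allowed. The recursion is stated
without division, so that it makes sense over a commutative ring: for the last `i` it reads
`α_{n+1}^{(1)} * (α_n^{(m)} - a_n^{(m)}) = 1`. -/
structure IsJacobiPerronExpansion {R K : Type*} [CommSemiring R] [CommRing K] [Algebra R K]
    {m : ℕ} (a : ℕ → Fin (m + 1) → R) (x : ℕ → Fin (m + 1) → K) : Prop where
  partial_last : ∀ n, a n (Fin.last m) = 1
  complete_last : ∀ n, x n (Fin.last m) = 1
  step : ∀ (n : ℕ) (i : Fin m),
    x (n + 1) 0 * (x n i.castSucc - algebraMap R K (a n i.castSucc)) = x (n + 1) i.succ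

/-- The vector `(f 1, …, f m, 1)`: quotients indexed from `1` to `m`, extended by the convention
`f (m + 1) = 1`. -/
def appendOne {R : Type*} [One R] (m : ℕ) (f : ℕ → R) : Fin (m + 1) → R :=
  fun i ↦ if (i : ℕ) < m then f (i + 1) else 1

theorem mulVec_eq_prod_smul_of_forall_mulVec_succ {R ι : Type*} [CommSemiring R] [Fintype ι]
    [DecidableEq ι] {P C : ℕ → Matrix ι ι R} {x : ℕ → ι → R} {c : ℕ → R}
    (hP_zero : P 0 = 1) (hP_succ : ∀ n, P (n + 1) = P n * C n)
    (hC : ∀ n, (C n).mulVec (x (n + 1)) = c n • x n) (n : ℕ) :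
    (P n).mulVec (x n) = (∏ j ∈ range n, c j) • x 0 := by
  induction n with
  | zero => simp [hP_zero]
  | succ n ih =>
    rw [hP_succ, ← Matrix.mulVec_mulVec, hC, Matrix.mulVec_smul, ih, smul_smul,
      prod_range_succ_comm]

theorem aeval_charpoly_smul_eq_zero {R K ι : Type*} [CommRing R] [CommRing K] [Algebra R K]
    [Fintype ι] [DecidableEq ι] {M : Matrix ι ι R} {v : ι → K} {μ : K}
    (h : (M.map (algebraMap R K)).mulVec v = μ • v) :
    Polynomial.aeval μ M.charpoly • v = 0 := by
  have heigen : (M.map (algebraMap R K)).toLin' v = μ • v := h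
  rw [← Polynomial.eval_map_algebraMap, ← Matrix.charpoly_map,
    ← Module.End.aeval_apply_of_mem_apply_eq_smul heigen, ← Matrix.charpoly_toLin',
    LinearMap.aeval_self_charpoly, LinearMap.zero_apply]

theorem prod_range_add_one_eq_of_eq {G : Type*} [CommMonoid G] {f : ℕ → G} {N : ℕ}
    (h : f N = f 0) : ∏ j ∈ range N, f (j + 1) = ∏ j ∈ range N, f j := by
  cases N with
  | zero => simp
  | succ N => rw [prod_range_succ, h, ← prod_range_succ']

section JacobiPerronMatrix

variable {R : Type*} {m : ℕ}

theorem jacobiPerronMatrix_map {S F : Type*} [NonAssocSemiring R] [NonAssocSemiring S]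
    [FunLike F R S] [RingHomClass F R S] (f : F) (a : Fin (m + 1) → R) :
    (jacobiPerronMatrix a).map f = jacobiPerronMatrix (f ∘ a) := by
  ext i j
  cases j using Fin.cases <;> simp [jacobiPerronMatrix, apply_ite f]

variable [NonAssocSemiring R]

theorem jacobiPerronMatrix_mulVec_castSucc (a y : Fin (m + 1) → R) (i : Fin m) :
    (jacobiPerronMatrix a).mulVec y i.castSucc = a i.castSucc * y 0 + y i.succ := by
  simp [jacobiPerronMatrix, Matrix.mulVec, dotProduct, Fin.sum_univ_succ]

theorem jacobiPerronMatrix_mulVec_last (a y : Fin (m + 1) → R) :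
    (jacobiPerronMatrix a).mulVec y (Fin.last m) = a (Fin.last m) * y 0 := by
  simp [jacobiPerronMatrix, Matrix.mulVec, dotProduct, Fin.sum_univ_succ,
    (Fin.castSucc_ne_last _).symm]

end JacobiPerronMatrix

namespace IsJacobiPerronConvergents

variable {R : Type*} [CommSemiring R] {m : ℕ} {a : ℕ → Fin (m + 1) → R}
  {A : ℤ → Fin (m + 1) → R}

theorem convergentMatrix_zero (hA : IsJacobiPerronConvergents a A) : convergentMatrix A 0 = 1 := by
  ext i j
  simp [convergentMatrix, Matrix.one_apply, ← hA.initial i j]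

theorem convergentMatrix_succ (hA : IsJacobiPerronConvergents a A) (n : ℕ) :
    convergentMatrix A (n + 1) = convergentMatrix A n * jacobiPerronMatrix (a n) := by
  ext i j
  cases j using Fin.cases with
  | zero =>
    simp [convergentMatrix, jacobiPerronMatrix, Matrix.mul_apply, hA.recurrence, mul_comm]
  | succ j => simp [convergentMatrix, jacobiPerronMatrix, Matrix.mul_apply]

end IsJacobiPerronConvergents

namespace IsJacobiPerronExpansion

variable {R K : Type*} [CommSemiring R] [CommRing K] [Algebra R K] {m : ℕ}
  {a : ℕ → Fin (m + 1) → R} {x : ℕ → Fin (m + 1) → K}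

theorem jacobiPerronMatrix_mulVec (hx : IsJacobiPerronExpansion a x) (n : ℕ) :
    ((jacobiPerronMatrix (a n)).map (algebraMap R K)).mulVec (x (n + 1)) = x (n + 1) 0 • x n := by
  rw [jacobiPerronMatrix_map]
  ext i
  cases i using Fin.lastCases with
  | last =>
    simp [jacobiPerronMatrix_mulVec_last, hx.partial_last, hx.complete_last]
  | cast i =>
    rw [jacobiPerronMatrix_mulVec_castSucc, ← hx.step, Function.comp_apply, Pi.smul_apply,
      smul_eq_mul]
    ring

theorem convergentMatrix_mulVec (hx : IsJacobiPerronExpansion a x) {A : ℤ → Fin (m + 1) → R}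
    (hA : IsJacobiPerronConvergents a A) (n : ℕ) :
    ((convergentMatrix A n).map (algebraMap R K)).mulVec (x n) =
      (∏ j ∈ range n, x (j + 1) 0) • x 0 :=
  mulVec_eq_prod_smul_of_forall_mulVec_succ
    (P := fun n ↦ (convergentMatrix A n).map (algebraMap R K))
    (by simp [hA.convergentMatrix_zero])
    (fun n ↦ by rw [hA.convergentMatrix_succ, Matrix.map_mul])
    hx.jacobiPerronMatrix_mulVec n

end IsJacobiPerronExpansion

section AppendOne

variable {R : Type*} [One R] {m : ℕ}

theorem appendOne_castSucc (f : ℕ → R) (i : Fin m) : appendOne m f i.castSucc = f (i + 1) := by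
  simp [appendOne]

theorem appendOne_last (f : ℕ → R) : appendOne m f (Fin.last m) = 1 := by
  simp [appendOne]

theorem appendOne_zero (hm : 1 ≤ m) (f : ℕ → R) : appendOne m f 0 = f 1 :=
  if_pos hm

theorem appendOne_congr {f g : ℕ → R} (h : ∀ i ∈ Icc 1 m, f i = g i) :
    appendOne m f = appendOne m g := by
  ext i
  cases i using Fin.lastCases with
  | last => simp only [appendOne_last]
  | cast i => simpa only [appendOne_castSucc] using h (i + 1) (by simp)

end AppendOne

theorem JPConv.isJacobiPerronConvergents {m : ℕ} {a : ℕ → ℕ → ℚ} {A : ℤ → ℕ → ℚ}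
    (hA : JPConv m a A) :
    IsJacobiPerronConvergents (fun n ↦ appendOne m (a n)) fun n i ↦ A n (i + 1) where
  initial i j := by
    simpa [Fin.ext_iff] using hA.1 (i + 1) (by simp; omega) (j + 1) (by simp; omega)
  recurrence n i := by
    have hshift : ∑ j ∈ Icc 1 m, a n j * A (n - j) (i + 1) =
        ∑ j : Fin m, a n (j + 1) * A (n - ((j : ℕ) + 1)) (i + 1) := by
      rw [Fin.sum_univ_eq_sum_range fun j ↦ a n (j + 1) * A (n - ((j : ℤ) + 1)) (i + 1),
        ← Ico_add_one_right_eq_Icc, sum_Ico_eq_sum_range]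
      simp [add_comm 1]
    rw [hA.2 n (i + 1) (by simp; omega), Fin.sum_univ_castSucc, hshift]
    simp [appendOne_castSucc, appendOne_last, sub_sub]

theorem JPRun.isJacobiPerronExpansion {p m : ℕ} [Fact p.Prime] {α : ℕ → ℕ → ℚ_[p]}
    {a : ℕ → ℕ → ℚ} (hrun : JPRun p m α a) (hm : 1 ≤ m) :
    IsJacobiPerronExpansion (fun n ↦ appendOne m (a n)) fun n ↦ appendOne m (α n) where
  partial_last n := appendOne_last _
  complete_last n := appendOne_last _
  step n i := by
    obtain ⟨-, hne, hfirst, hnext⟩ := hrun n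
    rw [appendOne_zero hm, appendOne_castSucc, appendOne_castSucc, eq_ratCast, hfirst]
    obtain hlt | hlast : (i : ℕ) + 1 < m ∨ (i : ℕ) + 1 = m := by omega
    · have hsucc : appendOne m (α (n + 1)) i.succ = α (n + 1) (i + 2) := if_pos hlt
      rw [hsucc, hnext (i + 2) (by simp; omega), div_eq_inv_mul]
      rfl
    · have hsucc : appendOne m (α (n + 1)) i.succ = 1 := if_neg hlast.not_lt
      rw [hsucc, hlast, inv_mul_cancel₀ (sub_ne_zero.mpr hne)]

theorem jacobiPerron_periodic_eigenvalue_general {R K : Type*} [CommRing R] [CommRing K]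
    [Algebra R K] {m N : ℕ} {a : ℕ → Fin (m + 1) → R} {x : ℕ → Fin (m + 1) → K}
    {A : ℤ → Fin (m + 1) → R} (hx : IsJacobiPerronExpansion a x)
    (hA : IsJacobiPerronConvergents a A) (hper : x N = x 0) :
    ((convergentMatrix A N).map (algebraMap R K)).mulVec (x 0) =
        (∏ j ∈ range N, x j 0) • x 0 ∧
      Polynomial.aeval (∏ j ∈ range N, x j 0) (convergentMatrix A N).charpoly = 0 := by
  have heigen : ((convergentMatrix A N).map (algebraMap R K)).mulVec (x 0) =
      (∏ j ∈ range N, x j 0) • x 0 := by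
    rw [← prod_range_add_one_eq_of_eq (f := fun j ↦ x j 0) (congrFun hper 0),
      ← hx.convergentMatrix_mulVec hA, hper]
  refine ⟨heigen, ?_⟩
  simpa [hx.complete_last] using congrFun (aeval_charpoly_smul_eq_zero heigen) (Fin.last m)

/-- For a purely periodic run of the `p`-adic Jacobi–Perron algorithm with
period `N`, the matrix `𝓜` (over `ℚ_p`) satisfies `𝓜 ⬝ v = μ • v` where
`v = (α₀⁽¹⁾, …, α₀⁽ᵐ⁾, 1)ᵀ` and `μ = α₀⁽¹⁾α₁⁽¹⁾⋯α_{N-1}⁽¹⁾`; in particular `P(μ) = 0`. -/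
theorem jacobiPerron_periodic_eigenvalue (p m N : ℕ) [hp : Fact p.Prime]
    (hp2 : 2 < p) (hm : 1 ≤ m) (hN : 1 ≤ N)
    (α : ℕ → ℕ → ℚ_[p]) (a : ℕ → ℕ → ℚ) (A : ℤ → ℕ → ℚ)
    (hrun : JPRun p m α a) (hconv : JPConv m a A)
    (hper : ∀ n : ℕ, ∀ i ∈ Finset.Icc 1 m, α (n + N) i = α n i ∧ a (n + N) i = a n i)
    (M : Matrix (Fin (m + 1)) (Fin (m + 1)) ℚ)
    (hM : ∀ i j : Fin (m + 1), M i j = A ((N : ℤ) - ((j : ℕ) + 1)) ((i : ℕ) + 1))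
    (v : Fin (m + 1) → ℚ_[p])
    (hv : ∀ i : Fin (m + 1), v i = if (i : ℕ) < m then α 0 ((i : ℕ) + 1) else 1)
    (μ : ℚ_[p]) (hμ : μ = ∏ j ∈ Finset.range N, α j 1) :
    (M.map (fun q : ℚ => (q : ℚ_[p]))).mulVec v = μ • v ∧
      Polynomial.aeval μ (Matrix.charpoly M) = 0 := by
  obtain rfl : M = convergentMatrix (fun n i ↦ A n (i + 1)) N := Matrix.ext hM
  obtain rfl : v = appendOne m (α 0) := funext hv
  obtain rfl : μ = ∏ j ∈ range N, appendOne m (α j) 0 := by simpa only [appendOne_zero hm] using hμ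
  exact jacobiPerron_periodic_eigenvalue_general (hrun.isJacobiPerronExpansion hm)
    hconv.isJacobiPerronConvergents (appendOne_congr fun i hi ↦ by simpa using (hper 0 i hi).1)
end

section
/- For a purely periodic run of the p-adic Jacobi–Perron algorithm with period N, the number μ = α_0^{(1)} α_1^{(1)} ⋯ α_{N-1}^{(1)} is the root of the characteristic polynomial P(X) that is greatest in p-adic norm: every root z ∈ K of P(X) with z ≠ μ satisfies ‖z‖ < ‖μ‖. -/
open Finset Filter

/-!
Let `w` be a left eigenvector of the matrix of
convergents for a root `z`, and let `U` be the combination of the convergents with coefficients `w`,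
so that `U (k + N) = z * U k`. Replacing the partial quotients by the complete quotients in the
recurrence of `U` gives a quantity `S n` that satisfies `S (n + 1) = α_{n+1}^{(1)} * S n`, because
`(α_n^{(1)}, …, α_n^{(m)}, 1)` is carried by the algorithm to a multiple of its successor. Over one
period `S` is thus multiplied both by `μ` and by `z`, so `z ≠ μ` forces `S = 0`. Then `U` also
satisfies a recurrence whose coefficients `a_n^{(i)} - α_n^{(i)}` have norm less than `1`, which
makes `U` decay; hence `‖z‖ < 1`, whereas `‖μ‖ ≥ 1` since every `α_{n+1}^{(1)}` is the inverse of
an element of norm less than `1`.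
-/

namespace JacobiPerron

section Ultrametric

lemma isUltrametricDist_of_norm_map_eq {k K : Type*} [SeminormedRing k] [NormOneClass k]
    [IsUltrametricDist k] [NormedDivisionRing K] (f : k →+* K) (hf : ∀ x, ‖f x‖ = ‖x‖) :
    IsUltrametricDist K :=
  IsUltrametricDist.isUltrametricDist_of_forall_norm_natCast_le_one fun n => by
    rw [← map_natCast f, hf]
    exact IsUltrametricDist.norm_natCast_le_one k n

lemma norm_sum_lt_of_forall_lt {ι E : Type*} [SeminormedAddCommGroup E] [IsUltrametricDist E]
    {s : Finset ι} {f : ι → E} {C : ℝ} (hC : 0 < C) (hf : ∀ i ∈ s, ‖f i‖ < C) :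
    ‖∑ i ∈ s, f i‖ < C :=
  Finset.sum_induction f (fun x => ‖x‖ < C)
    (fun x y hx hy => (IsUltrametricDist.norm_add_le_max x y).trans_lt (max_lt hx hy))
    (by simpa using hC) hf

variable {R : Type*} [NormedRing R] [IsUltrametricDist R] {m N : ℕ} {e : ℕ → ℕ → R} {V : ℕ → R}

lemma norm_lt_of_contractive_recurrence (he : ∀ n, ∀ j < m, ‖e n j‖ < 1)
    (hV : ∀ n, V (n + m) = ∑ j ∈ range m, e n j * V (n + j)) {C : ℝ} (hC : 0 < C)
    (hinit : ∀ j < m, ‖V j‖ ≤ C) (n : ℕ) : ‖V (n + m)‖ < C := by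
  induction n using Nat.strong_induction_on with
  | _ n ih =>
    have hwindow : ∀ j < m, ‖V (n + j)‖ ≤ C := fun j hj => by
      rcases lt_or_ge (n + j) m with h | h
      · exact hinit _ h
      · obtain ⟨k, hk⟩ := Nat.exists_eq_add_of_le' h
        exact hk ▸ (ih k (by omega)).le
    rw [hV]
    refine norm_sum_lt_of_forall_lt hC fun j hj => ?_
    have hj := Finset.mem_range.1 hj
    calc ‖e n j * V (n + j)‖ ≤ ‖e n j‖ * ‖V (n + j)‖ := norm_mul_le _ _
      _ ≤ ‖e n j‖ * C := mul_le_mul_of_nonneg_left (hwindow j hj) (norm_nonneg _)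
      _ < C := mul_lt_of_lt_one_left hC (he n j hj)

lemma eq_zero_of_contractive_recurrence (he : ∀ n, ∀ j < m, ‖e n j‖ < 1)
    (hV : ∀ n, V (n + m) = ∑ j ∈ range m, e n j * V (n + j)) (hinit : ∀ j < m, V j = 0) :
    V = 0 := by
  funext k
  rcases lt_or_ge k m with hk | hk
  · exact hinit k hk
  · obtain ⟨n, rfl⟩ := Nat.exists_eq_add_of_le' hk
    refine norm_le_zero_iff.1 (le_of_forall_pos_le_add fun C hC => ?_)
    rw [zero_add]
    exact (norm_lt_of_contractive_recurrence he hV hC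
      (fun j hj => by simpa [hinit j hj] using hC.le) n).le

lemma add_mul_period_eq_pow_mul {M : Type*} [Monoid M] {V : ℕ → M} {z : M}
    (hz : ∀ k, V (k + N) = z * V k) (r k : ℕ) : V (k + r * N) = z ^ r * V k := by
  induction r with
  | zero => simp
  | succ r ih => rw [add_one_mul, ← add_assoc, hz, ih, pow_succ', mul_assoc]

theorem norm_lt_one_of_contractive_recurrence [NormOneClass R] [NormMulClass R]
    (he : ∀ n, ∀ j < m, ‖e n j‖ < 1)
    (hV : ∀ n, V (n + m) = ∑ j ∈ range m, e n j * V (n + j)) (hV0 : V ≠ 0) (hN : N ≠ 0) {z : R}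
    (hz : ∀ k, V (k + N) = z * V k) : ‖z‖ < 1 := by
  obtain ⟨i, hi, hVi⟩ : ∃ i < m, V i ≠ 0 := by
    by_contra! h
    exact hV0 (eq_zero_of_contractive_recurrence he hV h)
  obtain ⟨j, -, hmax⟩ := Finset.exists_max_image (range m) (fun j => ‖V j‖)
    ⟨i, Finset.mem_range.2 hi⟩
  have hVj : 0 < ‖V j‖ := (norm_pos_iff.2 hVi).trans_le (hmax i (Finset.mem_range.2 hi))
  have hdecay : ‖V (j + m * N)‖ < ‖V j‖ := by
    obtain ⟨n, hn⟩ := Nat.exists_eq_add_of_le'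
      ((Nat.le_mul_of_pos_right m (Nat.pos_of_ne_zero hN)).trans (Nat.le_add_left _ j))
    rw [hn]
    exact norm_lt_of_contractive_recurrence he hV hVj
      (fun i hi => hmax i (Finset.mem_range.2 hi)) n
  rw [add_mul_period_eq_pow_mul hz, norm_mul, norm_pow] at hdecay
  by_contra! h
  exact hdecay.not_ge (le_mul_of_one_le_left hVj.le (one_le_pow₀ h))

end Ultrametric

section Recurrence

variable {R : Type*} {m N : ℕ}

/-- The right-hand side `U n + ∑_{i=1}^m c_n^{(i)} U (n + m + 1 - i)` of the Jacobi–Perron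
recurrence with coefficients `c`, summed over `j = m - i`. It is used with the partial quotients and
with the complete quotients as coefficients. -/
def recurrenceForm [Semiring R] (m : ℕ) (c : ℕ → ℕ → R) (U : ℕ → R) (n : ℕ) : R :=
  U n + ∑ j ∈ range m, c n (m - j) * U (n + 1 + j)

lemma recurrenceForm_sub_recurrenceForm [Ring R] (c d : ℕ → ℕ → R) (U : ℕ → R) (n : ℕ) :
    recurrenceForm m c U n - recurrenceForm m d U n =
      ∑ j ∈ range m, (c n (m - j) - d n (m - j)) * U (n + 1 + j) := by
  simp only [recurrenceForm, sub_mul, Finset.sum_sub_distrib, add_sub_add_left_eq_sub]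

lemma recurrenceForm_add_period [CommSemiring R] {c : ℕ → ℕ → R} {U : ℕ → R} {z : R} {n : ℕ}
    (hc : ∀ i ∈ Icc 1 m, c (n + N) i = c n i) (hz : ∀ k ≤ n + m, U (k + N) = z * U k) :
    recurrenceForm m c U (n + N) = z * recurrenceForm m c U n := by
  rw [recurrenceForm, recurrenceForm, mul_add, Finset.mul_sum, hz n (by omega)]
  congr 1
  refine Finset.sum_congr rfl fun j hj => ?_
  have hj := Finset.mem_range.1 hj
  rw [hc _ (Finset.mem_Icc.2 (by omega)), show n + N + 1 + j = n + 1 + j + N by omega,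
    hz _ (by omega), mul_left_comm]

/-- `U` solves the recurrence of the convergents attached to the partial quotients `a`. The index is
shifted by `m + 1` compared with the convergents, so that the initial values are `U 0, …, U m`. -/
def IsRecurrenceSolution [Semiring R] (m : ℕ) (a : ℕ → ℕ → R) (U : ℕ → R) : Prop :=
  ∀ n, U (n + m + 1) = recurrenceForm m a U n

lemma IsRecurrenceSolution.add_period [CommSemiring R] {a : ℕ → ℕ → R} {U : ℕ → R} {z : R}
    (hU : IsRecurrenceSolution m a U) (ha : ∀ n, ∀ i ∈ Icc 1 m, a (n + N) i = a n i)
    (hinit : ∀ k ≤ m, U (k + N) = z * U k) (k : ℕ) : U (k + N) = z * U k := by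
  induction k using Nat.strong_induction_on with
  | _ k ih =>
    rcases le_or_gt k m with hk | hk
    · exact hinit k hk
    · obtain ⟨n, rfl⟩ := Nat.exists_eq_add_of_le' (Nat.succ_le_of_lt hk)
      rw [show n + m.succ + N = n + N + m + 1 by omega, hU, Nat.add_succ, hU]
      exact recurrenceForm_add_period (ha n) fun k hk => ih k (by omega)

end Recurrence

section Convergents

variable {R : Type*} {m N : ℕ}

/-- `JPConv` with values in an arbitrary semiring. -/
structure IsConvergentFamily [Semiring R] (m : ℕ) (a : ℕ → ℕ → R) (A : ℤ → ℕ → R) : Prop where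
  init : ∀ i ∈ Icc 1 (m + 1), ∀ j ∈ Icc 1 (m + 1), A (-(j : ℤ)) i = if i = j then 1 else 0
  recurrence : ∀ n : ℕ, ∀ i ∈ Icc 1 (m + 1),
    A n i = (∑ j ∈ Icc 1 m, a n j * A ((n : ℤ) - j) i) + A ((n : ℤ) - m - 1) i

lemma _root_.JPConv.map [Semiring R] {a : ℕ → ℕ → ℚ} {A : ℤ → ℕ → ℚ} (h : JPConv m a A)
    (f : ℚ →+* R) : IsConvergentFamily m (fun n i => f (a n i)) (fun n i => f (A n i)) where
  init i hi j hj := by rw [h.1 i hi j hj, apply_ite f, map_one, map_zero]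
  recurrence n i hi := by rw [h.2 n i hi, map_add, map_sum]; simp only [map_mul]

/-- The matrix of convergents `𝓜`, with entries `A_{N-j}^{(i)}` for `i, j = 1, …, m + 1`. -/
def convergentMatrix (m : ℕ) (A : ℤ → ℕ → R) (N : ℕ) : Matrix (Fin (m + 1)) (Fin (m + 1)) R :=
  .of fun i j => A ((N : ℤ) - ((j : ℕ) + 1)) ((i : ℕ) + 1)

/-- The combination `∑_i w_i A_n^{(i)}` of the convergents, at `n = k - (m + 1)`. -/
def convergentCombination [Semiring R] (w : Fin (m + 1) → R) (A : ℤ → ℕ → R) (k : ℕ) : R :=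
  ∑ i, w i * A ((k : ℤ) - (m + 1)) ((i : ℕ) + 1)

lemma vecMul_convergentMatrix_rev [Semiring R] (w : Fin (m + 1) → R) (A : ℤ → ℕ → R)
    (j : Fin (m + 1)) :
    Matrix.vecMul w (convergentMatrix m A N) j.rev = convergentCombination w A (j + N) := by
  simp only [Matrix.vecMul, dotProduct, convergentMatrix, Matrix.of_apply, convergentCombination]
  refine Finset.sum_congr rfl fun i _ => ?_
  congr 2
  rw [Fin.val_rev]
  omega

lemma IsConvergentFamily.combination_eq_rev [Semiring R] {a : ℕ → ℕ → R} {A : ℤ → ℕ → R}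
    (hA : IsConvergentFamily m a A) (w : Fin (m + 1) → R) (j : Fin (m + 1)) :
    convergentCombination w A j = w j.rev := by
  have hentry (i : Fin (m + 1)) : A ((j : ℤ) - (m + 1)) (i + 1) = if i = j.rev then 1 else 0 := by
    have hindex : (j : ℤ) - (m + 1) = -((j.rev + 1 : ℕ) : ℤ) := by rw [Fin.val_rev]; omega
    rw [hindex, hA.init _ (Finset.mem_Icc.2 (by omega)) _ (Finset.mem_Icc.2 (by omega))]
    simp only [Nat.add_right_cancel_iff, Fin.val_inj]
  simp only [convergentCombination, hentry, mul_ite, mul_one, mul_zero, Finset.sum_ite_eq',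
    Finset.mem_univ, if_true]

lemma IsConvergentFamily.apply_eq [Semiring R] {a : ℕ → ℕ → R} {A : ℤ → ℕ → R}
    (hA : IsConvergentFamily m a A) (n : ℕ) {i : ℕ} (hi : i ∈ Icc 1 (m + 1)) :
    A n i = recurrenceForm m a (fun k => A ((k : ℤ) - (m + 1)) i) n := by
  rw [hA.recurrence n i hi, recurrenceForm, add_comm, sub_sub, ← Finset.Ico_add_one_right_eq_Icc,
    Finset.sum_Ico_eq_sum_range, ← Finset.sum_range_reflect]
  congr 1
  refine Finset.sum_congr rfl fun j hj => ?_
  have hj := Finset.mem_range.1 hj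
  rw [show 1 + (m + 1 - 1 - 1 - j) = m - j by omega]
  congr 2
  omega

lemma IsConvergentFamily.isRecurrenceSolution_combination [CommSemiring R] {a : ℕ → ℕ → R}
    {A : ℤ → ℕ → R} (hA : IsConvergentFamily m a A) (w : Fin (m + 1) → R) :
    IsRecurrenceSolution m a (convergentCombination w A) := by
  intro n
  have hrow (i : Fin (m + 1)) : A (((n + m + 1 : ℕ) : ℤ) - (m + 1)) (i + 1) =
      recurrenceForm m a (fun k => A ((k : ℤ) - (m + 1)) (i + 1)) n := by
    rw [show ((n + m + 1 : ℕ) : ℤ) - (m + 1) = n by push_cast; ring]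
    exact hA.apply_eq n (Finset.mem_Icc.2 (by omega))
  simp only [convergentCombination, recurrenceForm, hrow, mul_add, Finset.sum_add_distrib,
    Finset.mul_sum]
  rw [Finset.sum_comm]
  simp only [mul_left_comm]

end Convergents

lemma prod_range_add_one_eq_of_eq {M : Type*} [CommMonoid M] {N : ℕ} {f : ℕ → M}
    (hf : f N = f 0) :
    ∏ j ∈ range N, f (j + 1) = ∏ j ∈ range N, f j := by
  cases N with
  | zero => rfl
  | succ N => rw [Finset.prod_range_succ, hf, Finset.prod_range_succ']

section Run

variable {K : Type*} [NormedField K] {m N : ℕ} {α a : ℕ → ℕ → K}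

/-- A run of the Jacobi–Perron algorithm in a normed field, for any choice of partial quotients at
distance less than `1` from the complete quotients. The division by `α_n^{(m)} - a_n^{(m)}` is
written as the multiplication by its inverse `α_{n+1}^{(1)}`. -/
structure IsRun (m : ℕ) (α a : ℕ → ℕ → K) : Prop where
  norm_sub_lt_one : ∀ n, ∀ i ∈ Icc 1 m, ‖α n i - a n i‖ < 1
  succ_one_mul : ∀ n, α (n + 1) 1 * (α n m - a n m) = 1
  succ_succ : ∀ n, ∀ i ∈ Ico 1 m, α (n + 1) (i + 1) = α (n + 1) 1 * (α n i - a n i)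

lemma _root_.JPRun.map {p : ℕ} [Fact p.Prime] {α : ℕ → ℕ → ℚ_[p]} {a : ℕ → ℕ → ℚ}
    (h : JPRun p m α a) (f : ℚ_[p] →+* K) (hf : ∀ x, ‖f x‖ = ‖x‖) :
    IsRun m (fun n i => f (α n i)) (fun n i => f (a n i : ℚ_[p])) where
  norm_sub_lt_one n i hi := by
    rw [← map_sub, hf]
    exact ((h n).1 i hi).2.2
  succ_one_mul n := by
    obtain ⟨-, hne, hone, -⟩ := h n
    rw [← map_sub, ← map_mul, hone, inv_mul_cancel₀ (sub_ne_zero.2 hne), map_one]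
  succ_succ n i hi := by
    obtain ⟨-, -, hone, hsucc⟩ := h n
    have hi := Finset.mem_Ico.1 hi
    rw [← map_sub, ← map_mul, hone, hsucc (i + 1) (Finset.mem_Icc.2 (by omega)),
      Nat.add_sub_cancel, div_eq_inv_mul]

lemma IsRun.one_le_norm_succ_one (hrun : IsRun m α a) (hm : 1 ≤ m) (n : ℕ) :
    1 ≤ ‖α (n + 1) 1‖ := by
  have hlt := hrun.norm_sub_lt_one n m (Finset.mem_Icc.2 ⟨hm, le_rfl⟩)
  have hmul : ‖α (n + 1) 1‖ * ‖α n m - a n m‖ = 1 := by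
    rw [← norm_mul, hrun.succ_one_mul, norm_one]
  rw [← hmul]
  exact mul_le_of_le_one_right (norm_nonneg _) hlt.le

lemma IsRun.recurrenceForm_succ (hrun : IsRun m α a) (hm : 1 ≤ m) {U : ℕ → K}
    (hU : IsRecurrenceSolution m a U) (n : ℕ) :
    recurrenceForm m α U (n + 1) = α (n + 1) 1 * recurrenceForm m α U n := by
  obtain ⟨l, rfl⟩ := Nat.exists_eq_add_of_le' hm
  have hform : recurrenceForm (l + 1) α U n = U (n + (l + 1) + 1) +
      ∑ j ∈ range (l + 1), (α n (l + 1 - j) - a n (l + 1 - j)) * U (n + 1 + j) := by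
    rw [← recurrenceForm_sub_recurrenceForm, hU, add_sub_cancel]
  have hshift : ∀ j ∈ range l, α (n + 1) (l + 1 - j) * U (n + 1 + 1 + j) =
      α (n + 1) 1 * ((α n (l + 1 - (j + 1)) - a n (l + 1 - (j + 1))) * U (n + 1 + (j + 1))) := by
    intro j hj
    have hj := Finset.mem_range.1 hj
    rw [show l + 1 - j = l - j + 1 by omega,
      hrun.succ_succ n (l - j) (Finset.mem_Ico.2 (by omega)), Nat.add_sub_add_right, mul_assoc,
      add_right_comm (n + 1) 1 j, add_assoc (n + 1) j 1]
  calc recurrenceForm (l + 1) α U (n + 1)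
    _ = U (n + 1) + (∑ j ∈ range l, α (n + 1) (l + 1 - j) * U (n + 1 + 1 + j) +
          α (n + 1) 1 * U (n + (l + 1) + 1)) := by
      rw [recurrenceForm, Finset.sum_range_succ, Nat.add_sub_cancel_left,
        show n + 1 + 1 + l = n + (l + 1) + 1 by omega]
    _ = α (n + 1) 1 * (α n (l + 1) - a n (l + 1)) * U (n + 1) +
          (α (n + 1) 1 * ∑ j ∈ range l, (α n (l + 1 - (j + 1)) - a n (l + 1 - (j + 1))) *
            U (n + 1 + (j + 1)) + α (n + 1) 1 * U (n + (l + 1) + 1)) := by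
      rw [hrun.succ_one_mul, one_mul, Finset.sum_congr rfl hshift, Finset.mul_sum]
    _ = α (n + 1) 1 * recurrenceForm (l + 1) α U n := by
      rw [hform, Finset.sum_range_succ', Nat.sub_zero, add_zero]
      ring

lemma IsRun.recurrenceForm_eq_prod_mul (hrun : IsRun m α a) (hm : 1 ≤ m) {U : ℕ → K}
    (hU : IsRecurrenceSolution m a U) (n : ℕ) :
    recurrenceForm m α U n = (∏ j ∈ range n, α (j + 1) 1) * recurrenceForm m α U 0 := by
  induction n with
  | zero => simp
  | succ n ih =>
    rw [hrun.recurrenceForm_succ hm hU, ih, Finset.prod_range_succ, mul_left_comm, mul_assoc,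
      mul_left_comm]

lemma IsRun.one_le_norm_prod (hrun : IsRun m α a) (hm : 1 ≤ m) (hα : α N 1 = α 0 1) :
    1 ≤ ‖∏ j ∈ range N, α j 1‖ := by
  rw [← prod_range_add_one_eq_of_eq hα, norm_prod]
  exact Finset.one_le_prod fun j _ => hrun.one_le_norm_succ_one hm j

lemma IsRun.recurrenceForm_eq_zero (hrun : IsRun m α a) (hm : 1 ≤ m)
    (hα : ∀ i ∈ Icc 1 m, α N i = α 0 i) {U : ℕ → K} (hU : IsRecurrenceSolution m a U) {z : K}
    (hz : ∀ k, U (k + N) = z * U k) (hzμ : z ≠ ∏ j ∈ range N, α j 1) (n : ℕ) :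
    recurrenceForm m α U n = 0 := by
  have hperiod : (∏ j ∈ range N, α j 1) * recurrenceForm m α U 0 =
      z * recurrenceForm m α U 0 := by
    rw [← prod_range_add_one_eq_of_eq (f := fun j => α j 1) (hα 1 (Finset.mem_Icc.2 ⟨le_rfl, hm⟩)),
      ← hrun.recurrenceForm_eq_prod_mul hm hU,
      ← recurrenceForm_add_period (by simpa using hα) fun k _ => hz k, zero_add]
  have hzero : recurrenceForm m α U 0 = 0 :=
    (mul_eq_mul_right_iff.1 hperiod).resolve_left hzμ.symm
  rw [hrun.recurrenceForm_eq_prod_mul hm hU, hzero, mul_zero]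

theorem IsRun.norm_lt_one_of_ne_prod [IsUltrametricDist K] (hrun : IsRun m α a) (hm : 1 ≤ m)
    (hN : N ≠ 0) (hα : ∀ i ∈ Icc 1 m, α N i = α 0 i) {U : ℕ → K}
    (hU : IsRecurrenceSolution m a U) (hU0 : U ≠ 0) {z : K} (hz : ∀ k, U (k + N) = z * U k)
    (hzμ : z ≠ ∏ j ∈ range N, α j 1) : ‖z‖ < 1 := by
  have hform := hrun.recurrenceForm_eq_zero hm hα hU hz hzμ
  refine norm_lt_one_of_contractive_recurrence (m := m) (V := fun k => U (k + 1))
    (e := fun n j => a n (m - j) - α n (m - j)) (fun n j hj => ?_) (fun n => ?_) (fun hV => ?_) hN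
    fun k => by rw [← hz, add_right_comm]
  · rw [norm_sub_rev]
    exact hrun.norm_sub_lt_one n _ (Finset.mem_Icc.2 (by omega))
  · simp only [add_right_comm n _ 1]
    rw [← recurrenceForm_sub_recurrenceForm, hform, sub_zero, ← hU, add_right_comm]
  · have hsucc (k : ℕ) : U (k + 1) = 0 := congrFun hV k
    have hzero : U 0 = 0 := by
      simpa [recurrenceForm, add_comm 1, hsucc] using hform 0
    exact hU0 (funext fun k => k.casesOn hzero hsucc)

end Run

lemma exists_vecMul_eq_smul_of_isRoot_charpoly {n R : Type*} [Fintype n] [DecidableEq n]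
    [CommRing R] [IsDomain R] {M : Matrix n n R} {z : R} (hz : M.charpoly.IsRoot z) :
    ∃ w ≠ 0, Matrix.vecMul w M = z • w := by
  have hdet : (Matrix.scalar n z - M).det = 0 := by rwa [← Matrix.eval_charpoly]
  obtain ⟨w, hw0, hw⟩ := Matrix.exists_vecMul_eq_zero_iff.2 hdet
  refine ⟨w, hw0, ?_⟩
  rw [Matrix.vecMul_sub, sub_eq_zero] at hw
  rw [← hw]
  ext i
  simp [Matrix.vecMul_diagonal, mul_comm]

end JacobiPerron

open JacobiPerron

theorem jacobiPerron_periodic_dominant_root_general {K : Type*} [NormedField K]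
    [IsUltrametricDist K] {m N : ℕ} (hm : 1 ≤ m) (hN : N ≠ 0) {α a : ℕ → ℕ → K} {A : ℤ → ℕ → K}
    (hrun : IsRun m α a) (hconv : IsConvergentFamily m a A)
    (hper : ∀ n, ∀ i ∈ Icc 1 m, α (n + N) i = α n i ∧ a (n + N) i = a n i) {z : K}
    (hz : (convergentMatrix m A N).charpoly.IsRoot z) (hzμ : z ≠ ∏ j ∈ range N, α j 1) :
    ‖z‖ < ‖∏ j ∈ range N, α j 1‖ := by
  have hα : ∀ i ∈ Icc 1 m, α N i = α 0 i := fun i hi => by simpa using (hper 0 i hi).1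
  obtain ⟨w, hw0, hw⟩ := exists_vecMul_eq_smul_of_isRoot_charpoly hz
  have hU := hconv.isRecurrenceSolution_combination w
  have hperiod := hU.add_period (N := N) (z := z) (fun n i hi => (hper n i hi).2) fun k hk => by
    have hk' := Nat.lt_succ_of_le hk
    rw [← vecMul_convergentMatrix_rev w A ⟨k, hk'⟩, hw, hconv.combination_eq_rev w ⟨k, hk'⟩]
    rfl
  have hU0 : convergentCombination w A ≠ 0 := fun h => hw0 <| funext fun i => by
    rw [← i.rev_rev, ← hconv.combination_eq_rev w, h]
    rfl
  exact (hrun.norm_lt_one_of_ne_prod hm hN hα hU hU0 hperiod hzμ).trans_le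
    (hrun.one_le_norm_prod hm (hα 1 (Finset.mem_Icc.2 ⟨le_rfl, hm⟩)))

/-- For a purely periodic run with period `N`, the number
`μ = α₀⁽¹⁾α₁⁽¹⁾⋯α_{N-1}⁽¹⁾` is the root of the characteristic polynomial `P(X)` that is
greatest in `p`-adic norm: in an algebraic closure `K` of `ℚ_p` (with the unique absolute
value extending the `p`-adic one), every root `z ≠ μ` of `P` satisfies `‖z‖ < ‖μ‖`. -/
theorem jacobiPerron_periodic_dominant_root (p m N : ℕ) [hp : Fact p.Prime]
    (hp2 : 2 < p) (hm : 1 ≤ m) (hN : 1 ≤ N)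
    (α : ℕ → ℕ → ℚ_[p]) (a : ℕ → ℕ → ℚ) (A : ℤ → ℕ → ℚ)
    (hrun : JPRun p m α a) (hconv : JPConv m a A)
    (hper : ∀ n : ℕ, ∀ i ∈ Finset.Icc 1 m, α (n + N) i = α n i ∧ a (n + N) i = a n i)
    (M : Matrix (Fin (m + 1)) (Fin (m + 1)) ℚ)
    (hM : ∀ i j : Fin (m + 1), M i j = A ((N : ℤ) - ((j : ℕ) + 1)) ((i : ℕ) + 1))
    (μ : ℚ_[p]) (hμ : μ = ∏ j ∈ Finset.range N, α j 1)
    (K : Type) [NormedField K] [Algebra ℚ_[p] K] [IsAlgClosure ℚ_[p] K]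
    (hext : ∀ x : ℚ_[p], ‖algebraMap ℚ_[p] K x‖ = ‖x‖)
    (z : K)
    (hz : Polynomial.aeval z ((Matrix.charpoly M).map (algebraMap ℚ ℚ_[p])) = 0)
    (hzμ : z ≠ algebraMap ℚ_[p] K μ) :
    ‖z‖ < ‖algebraMap ℚ_[p] K μ‖ := by
  obtain rfl : M = convergentMatrix m A N := Matrix.ext hM
  have := isUltrametricDist_of_norm_map_eq _ hext
  let c : ℚ →+* K := (algebraMap ℚ_[p] K).comp (Rat.castHom ℚ_[p])
  have hroot : ((convergentMatrix m A N).map c).charpoly.IsRoot z := by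
    rwa [Polynomial.aeval_def, Polynomial.eval₂_map, ← Polynomial.eval_map,
      ← Matrix.charpoly_map] at hz
  rw [hμ, map_prod] at hzμ ⊢
  exact jacobiPerron_periodic_dominant_root_general hm (Nat.one_le_iff_ne_zero.1 hN)
    (hrun.map _ hext) (hconv.map c) (fun n i hi => by simp [hper n i hi]) hroot hzμ
end

section
/- For a purely periodic run of the p-adic Jacobi–Perron algorithm with period N and μ = α_0^{(1)} α_1^{(1)} ⋯ α_{N-1}^{(1)} ∈ ℚ_p, the subfield of ℚ_p generated over ℚ by μ equals the subfield generated over ℚ by α_0^{(1)}, …, α_0^{(m)}, i.e. ℚ(μ) = ℚ(α_0^{(1)}, …, α_0^{(m)}); moreover μ is not rational (μ ∉ ℚ). -/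
open Finset Filter

/-!
Write `v n = (α n 1, …, α n m, 1)`, `δ n = α n m - a n m` and `λ n = δ 0 ⋯ δ (n - 1)`. One step of
the algorithm is, up to the factor `δ n`, an invertible linear map `T n` with rational entries: the
vectors `λ n • v n` form an orbit of the maps `T n`. Periodicity thus makes `v 0` an eigenvector of
`T (N - 1) ∘ ⋯ ∘ T 0` with eigenvalue `λ N = μ⁻¹`, so that `μ` lies in the field generated by the
`α 0 i`.

Conversely, for an orbit `u` the vectors `u n - u n (m + 1) • v n` do not shrink `p`-adically as `n`
grows, while `‖λ N‖ < 1`; hence the `λ N`-eigenspace is the line through `v 0`. A linear retraction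
of `ℚ_[p]` onto a field containing `μ` maps `v 0` to an eigenvector with the same last coordinate
`1`, hence fixes `v 0`.

If `μ` were rational, then so would be the `α 0 i`, and, up to a common denominator, `λ n` would be
a nonzero element of `ℤ[1/p]` with `p`-adic norm at most `p⁻ⁿ`, hence of real absolute value at
least `pⁿ`. But each `T n` expands the real sup norm by at most `1 + max |a n i|`. Once the run has
been replaced by the `N`-periodic extension of its first `N` steps, the maximum is over finitely
many partial quotients, so that this factor is less than `1 + p / 2 ≤ p`, uniformly in `n`.
-/

section IntegralAwayFromP

variable {p : ℕ}

lemma InZInvP.intCast (z : ℤ) : InZInvP p z := ⟨z, 0, by simp⟩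

lemma InZInvP.mul {x y : ℚ} (hx : InZInvP p x) (hy : InZInvP p y) : InZInvP p (x * y) := by
  obtain ⟨r, k, rfl⟩ := hx
  obtain ⟨s, l, rfl⟩ := hy
  exact ⟨r * s, k + l, by push_cast; rw [div_mul_div_comm, pow_add]⟩

variable [hp : Fact p.Prime]

lemma InZInvP.sub {x y : ℚ} (hx : InZInvP p x) (hy : InZInvP p y) : InZInvP p (x - y) := by
  obtain ⟨r, k, rfl⟩ := hx
  obtain ⟨s, l, rfl⟩ := hy
  have hp0 : (p : ℚ) ≠ 0 := mod_cast hp.out.ne_zero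
  refine ⟨r * p ^ l - s * p ^ k, k + l, ?_⟩
  push_cast
  field_simp
  ring

lemma one_le_norm_mul_padicNorm_intCast {z : ℤ} (hz : z ≠ 0) : 1 ≤ ‖z‖ * ‖(z : ℚ_[p])‖ := by
  have hp0 : (0 : ℝ) < p := mod_cast hp.out.pos
  have hle : (p : ℤ) ^ padicValInt p z ≤ |z| :=
    Int.le_of_dvd (abs_pos.2 hz) ((dvd_abs _ _).2 (padicValInt_dvd z))
  rw [Padic.norm_eq_zpow_neg_valuation (Int.cast_ne_zero.2 hz), Padic.valuation_intCast,
    zpow_neg, zpow_natCast, ← div_eq_mul_inv, one_le_div (by positivity), Int.norm_eq_abs]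
  exact mod_cast hle

lemma InZInvP.one_le_norm_mul_padicNorm {q : ℚ} (hq : InZInvP p q) (hq0 : q ≠ 0) :
    1 ≤ ‖q‖ * ‖(q : ℚ_[p])‖ := by
  obtain ⟨z, k, rfl⟩ := hq
  have hp0 : (p : ℝ) ≠ 0 := mod_cast hp.out.ne_zero
  have hz : z ≠ 0 := by
    rintro rfl
    simp at hq0
  have hprod : ‖(z : ℚ) / (p : ℚ) ^ k‖ * ‖(((z : ℚ) / (p : ℚ) ^ k : ℚ) : ℚ_[p])‖ =
      ‖z‖ * ‖(z : ℚ_[p])‖ := by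
    rw [← Rat.norm_cast_real, ← Int.norm_cast_real]
    push_cast
    simp only [norm_div, norm_pow, Padic.norm_p, Real.norm_natCast, inv_pow]
    field_simp
  exact hprod ▸ one_le_norm_mul_padicNorm_intCast hz

end IntegralAwayFromP

section Orbits

/-- `u` is an orbit of the linear maps `T n` of the Jacobi–Perron algorithm with partial quotients
`a`, where `T n` sends `(x 1, …, x (m + 1))` to
`(x (m + 1), x 1 - a n 1 • x (m + 1), …, x m - a n m • x (m + 1))`. Only the entries `u n i` with
`1 ≤ i ≤ m + 1` are constrained. -/
structure IsJPOrbit {R E : Type*} [Ring R] [AddCommGroup E] [Module R E] (m : ℕ) (a : ℕ → ℕ → R)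
    (u : ℕ → ℕ → E) : Prop where
  first (n : ℕ) : u (n + 1) 1 = u n (m + 1)
  succ (n i : ℕ) (hi : i ∈ Icc 1 m) : u (n + 1) (i + 1) = u n i - a n i • u n (m + 1)

namespace IsJPOrbit

section Module

variable {R E F : Type*} [Ring R] [AddCommGroup E] [Module R E] [AddCommGroup F] [Module R F]
  {m : ℕ} {a : ℕ → ℕ → R} {u : ℕ → ℕ → E}

lemma map (hu : IsJPOrbit m a u) (f : E →ₗ[R] F) : IsJPOrbit m a fun n i => f (u n i) where
  first n := congrArg f (hu.first n)
  succ n i hi := by rw [hu.succ n i hi, map_sub, map_smul]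

lemma of_map {v : ℕ → ℕ → F} (hv : IsJPOrbit m a v) {f : E →ₗ[R] F} (hf : Function.Injective f)
    (huv : ∀ n, ∀ i ∈ Icc 1 (m + 1), f (u n i) = v n i) : IsJPOrbit m a u where
  first n := hf <| by
    rw [huv _ _ (mem_Icc.2 (by omega)), huv _ _ (mem_Icc.2 (by omega)), hv.first]
  succ n i hi := hf <| by
    have := mem_Icc.1 hi
    rw [map_sub, map_smul, huv _ _ (mem_Icc.2 (by omega)), huv _ _ (mem_Icc.2 (by omega)),
      huv _ _ (mem_Icc.2 (by omega)), hv.succ n i hi]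

lemma forall_of_step (hu : IsJPOrbit m a u) {P : ℕ → E → Prop}
    (hzero : ∀ i ∈ Icc 1 (m + 1), P 0 (u 0 i)) (hshift : ∀ n x, P n x → P (n + 1) x)
    (hstep : ∀ n, ∀ i ∈ Icc 1 m, ∀ x y, P n x → P n y → P (n + 1) (x - a n i • y)) (n : ℕ) :
    ∀ i ∈ Icc 1 (m + 1), P n (u n i) := by
  induction n with
  | zero => exact hzero
  | succ n ih =>
    have hlast : P n (u n (m + 1)) := ih _ (right_mem_Icc.2 (by omega))
    intro i hi
    obtain ⟨hi₁, hi₂⟩ := mem_Icc.1 hi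
    obtain rfl | hne := eq_or_ne i 1
    · exact hu.first n ▸ hshift n _ hlast
    · obtain ⟨j, rfl⟩ := Nat.exists_eq_add_of_le' hi₁
      have hj : j ∈ Icc 1 m := mem_Icc.2 (by omega)
      exact hu.succ n j hj ▸ hstep n j hj _ _ (ih j (mem_Icc.2 (by omega))) hlast

end Module

lemma norm_le {R E : Type*} [SeminormedRing R] [SeminormedAddCommGroup E] [Module R E]
    [IsBoundedSMul R E] {m : ℕ} {a : ℕ → ℕ → R} {u : ℕ → ℕ → E} (hu : IsJPOrbit m a u) {B c : ℝ}
    (hc : 0 ≤ c) (ha : ∀ n, ∀ i ∈ Icc 1 m, ‖a n i‖ ≤ c) (hB : ∀ i ∈ Icc 1 (m + 1), ‖u 0 i‖ ≤ B)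
    (n : ℕ) : ∀ i ∈ Icc 1 (m + 1), ‖u n i‖ ≤ B * (c + 1) ^ n := by
  refine hu.forall_of_step (P := fun n x => ‖x‖ ≤ B * (c + 1) ^ n) (by simpa using hB) ?_ ?_ n
  · intro n x hx
    have hnonneg := (norm_nonneg x).trans hx
    calc ‖x‖ ≤ B * (c + 1) ^ n * 1 := by rwa [mul_one]
      _ ≤ B * (c + 1) ^ n * (c + 1) := by gcongr; linarith
      _ = B * (c + 1) ^ (n + 1) := by ring
  · intro n i hi x y hx hy
    calc ‖x - a n i • y‖ ≤ ‖x‖ + ‖a n i‖ * ‖y‖ :=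
          (norm_sub_le _ _).trans (by gcongr; exact norm_smul_le _ _)
      _ ≤ B * (c + 1) ^ n + c * (B * (c + 1) ^ n) := by gcongr; exact ha n i hi
      _ = B * (c + 1) ^ (n + 1) := by ring

variable {p m : ℕ} [hp : Fact p.Prime] {a u : ℕ → ℕ → ℚ}

lemma inZInvP (hu : IsJPOrbit m a u) (ha : ∀ n, ∀ i ∈ Icc 1 m, InZInvP p (a n i))
    (hzero : ∀ i ∈ Icc 1 (m + 1), InZInvP p (u 0 i)) (n : ℕ) :
    ∀ i ∈ Icc 1 (m + 1), InZInvP p (u n i) :=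
  hu.forall_of_step (P := fun _ => InZInvP p) hzero (fun _ _ => id)
    (fun n i hi _ _ hx hy => hx.sub ((ha n i hi).mul hy)) n

lemma exists_last_eq_zero_of_inZInvP (hu : IsJPOrbit m a u) {c : ℝ} (hc : 0 ≤ c) (hcp : c + 1 < p)
    (ha : ∀ n, ∀ i ∈ Icc 1 m, ‖a n i‖ ≤ c) (haZ : ∀ n, ∀ i ∈ Icc 1 m, InZInvP p (a n i))
    (hzero : ∀ i ∈ Icc 1 (m + 1), InZInvP p (u 0 i))
    (hpadic : ∀ n, ‖(u n (m + 1) : ℚ_[p])‖ ≤ (p : ℝ)⁻¹ ^ n) : ∃ n, u n (m + 1) = 0 := by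
  by_contra! hne
  have hp0 : (0 : ℝ) < p := mod_cast hp.out.pos
  have hlast : m + 1 ∈ Icc 1 (m + 1) := right_mem_Icc.2 (by omega)
  set B := ∑ i ∈ Icc 1 (m + 1), ‖u 0 i‖
  have hB : ∀ i ∈ Icc 1 (m + 1), ‖u 0 i‖ ≤ B := fun i hi =>
    single_le_sum (f := fun i => ‖u 0 i‖) (fun _ _ => norm_nonneg _) hi
  have hlower (n : ℕ) : 1 ≤ B * ((c + 1) / p) ^ n :=
    calc 1 ≤ ‖u n (m + 1)‖ * ‖(u n (m + 1) : ℚ_[p])‖ :=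
          (hu.inZInvP haZ hzero n _ hlast).one_le_norm_mul_padicNorm (hne n)
      _ ≤ B * (c + 1) ^ n * (p : ℝ)⁻¹ ^ n := by
          gcongr
          exacts [hu.norm_le hc ha hB n _ hlast, hpadic n]
      _ = B * ((c + 1) / p) ^ n := by rw [div_eq_mul_inv, mul_pow, mul_assoc]
  have hlim : Tendsto (fun n => B * ((c + 1) / p) ^ n) atTop (nhds (B * 0)) :=
    (tendsto_pow_atTop_nhds_zero_of_lt_one (by positivity) ((div_lt_one hp0).2 hcp)).const_mul B
  have hone_le : 1 ≤ B * 0 := ge_of_tendsto' hlim hlower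
  norm_num at hone_le

lemma exists_last_eq_zero (hu : IsJPOrbit m a u) {c : ℝ} (hc : 0 ≤ c) (hcp : c + 1 < p)
    (ha : ∀ n, ∀ i ∈ Icc 1 m, ‖a n i‖ ≤ c) (haZ : ∀ n, ∀ i ∈ Icc 1 m, InZInvP p (a n i))
    (hpadic : ∀ n, ‖(u n (m + 1) : ℚ_[p])‖ ≤ (p : ℝ)⁻¹ ^ n) : ∃ n, u n (m + 1) = 0 := by
  obtain ⟨D, hD⟩ :=
    IsLocalization.exist_integer_multiples (nonZeroDivisors ℤ) (Icc 1 (m + 1)) (u 0)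
  have hD0 : (D : ℤ) ≠ 0 := nonZeroDivisors.coe_ne_zero D
  have hDu : IsJPOrbit m a fun n i => ((D : ℤ) : ℚ) • u n i := hu.map (LinearMap.lsmul ℚ ℚ _)
  have hzero : ∀ i ∈ Icc 1 (m + 1), InZInvP p (((D : ℤ) : ℚ) • u 0 i) := by
    intro i hi
    obtain ⟨z, hz⟩ := hD i hi
    rw [Int.cast_smul_eq_zsmul, ← hz]
    exact .intCast z
  obtain ⟨n, hn⟩ := hDu.exists_last_eq_zero_of_inZInvP hc hcp ha haZ hzero fun n => by
    rw [smul_eq_mul, Rat.cast_mul, Rat.cast_intCast, norm_mul]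
    exact (mul_le_of_le_one_left (norm_nonneg _) (Padic.norm_int_le_one _)).trans (hpadic n)
  exact ⟨n, (smul_eq_zero_iff_right (Int.cast_ne_zero.2 hD0)).1 hn⟩

end IsJPOrbit

end Orbits

section Runs

variable {p : ℕ} [hp : Fact p.Prime]

/-- The vector `(α n 1, …, α n m, 1)` of complete quotients at step `n`, extended by `1` to all
indices outside `1, …, m`. -/
noncomputable def jpVector (m : ℕ) (α : ℕ → ℕ → ℚ_[p]) (n i : ℕ) : ℚ_[p] :=
  if i ∈ Icc 1 m then α n i else 1

/-- The product of the remainders `α j m - a j m` for `j < n`: the factor by which `jpVector` has to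
be multiplied at step `n` in order to become an orbit of the Jacobi–Perron linear maps. -/
noncomputable def jpScale (m : ℕ) (α : ℕ → ℕ → ℚ_[p]) (a : ℕ → ℕ → ℚ) (n : ℕ) : ℚ_[p] :=
  ∏ j ∈ range n, (α j m - (a j m : ℚ_[p]))

/-- The component of `u n` in the hyperplane of vectors with vanishing last coordinate, along the
line spanned by `jpVector m α n`. -/
noncomputable def jpDeviation (m : ℕ) (α u : ℕ → ℕ → ℚ_[p]) (n i : ℕ) : ℚ_[p] :=
  u n i - jpVector m α n i * u n (m + 1)

variable {m N : ℕ} {α u : ℕ → ℕ → ℚ_[p]} {a : ℕ → ℕ → ℚ}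

lemma jpVector_of_mem {i : ℕ} (hi : i ∈ Icc 1 m) (n : ℕ) : jpVector m α n i = α n i := if_pos hi

lemma jpVector_last (n : ℕ) : jpVector m α n (m + 1) = 1 := if_neg (by simp)

lemma jpVector_congr {k n : ℕ} (h : ∀ i ∈ Icc 1 m, α k i = α n i) (i : ℕ) :
    jpVector m α k i = jpVector m α n i :=
  ite_congr rfl (h i) fun _ => rfl

lemma jpVector_mem {K : IntermediateField ℚ ℚ_[p]} {n : ℕ} (h : ∀ i ∈ Icc 1 m, α n i ∈ K)
    (i : ℕ) : jpVector m α n i ∈ K := by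
  unfold jpVector
  split_ifs with hi
  exacts [h i hi, K.one_mem]

lemma jpScale_zero : jpScale m α a 0 = 1 := prod_range_zero _

lemma jpScale_succ (n : ℕ) :
    jpScale m α a (n + 1) = jpScale m α a n * (α n m - (a n m : ℚ_[p])) := prod_range_succ _ _

lemma jpDeviation_last (n : ℕ) : jpDeviation m α u n (m + 1) = 0 := by
  rw [jpDeviation, jpVector_last, one_mul, sub_self]

namespace JPRun

lemma jpScale_ne_zero (hrun : JPRun p m α a) (n : ℕ) : jpScale m α a n ≠ 0 :=
  prod_ne_zero_iff.2 fun j _ => sub_ne_zero.2 (hrun j).2.1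

lemma norm_sub_lt_one (hrun : JPRun p m α a) (n : ℕ) {i : ℕ} (hi : i ∈ Icc 1 m) :
    ‖α n i - (a n i : ℚ_[p])‖ < 1 := ((hrun n).1 i hi).2.2

lemma jpVector_succ_mul (hrun : JPRun p m α a) (n : ℕ) {i : ℕ} (hi : i ∈ Icc 1 m) :
    jpVector m α (n + 1) (i + 1) * (α n m - (a n m : ℚ_[p])) = α n i - (a n i : ℚ_[p]) := by
  obtain ⟨-, hne, -, hsucc⟩ := hrun n
  obtain ⟨hi₁, hi₂⟩ := mem_Icc.1 hi
  obtain rfl | hlt := hi₂.eq_or_lt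
  · rw [jpVector_last, one_mul]
  · rw [jpVector_of_mem (mem_Icc.2 (by omega)), hsucc (i + 1) (mem_Icc.2 (by omega)),
      Nat.add_sub_cancel, div_mul_cancel₀ _ (sub_ne_zero.2 hne)]

lemma prod_eq_inv_jpScale (hrun : JPRun p m α a) (hper : α N 1 = α 0 1) :
    ∏ j ∈ range N, α j 1 = (jpScale m α a N)⁻¹ := by
  have hshift : ∏ j ∈ range N, α j 1 = ∏ j ∈ range N, α (j + 1) 1 := by
    cases N with
    | zero => rfl
    | succ k => rw [prod_range_succ', prod_range_succ, hper]
  rw [hshift, jpScale, ← prod_inv_distrib]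
  exact prod_congr rfl fun j _ => (hrun j).2.2.1

variable (hm : 1 ≤ m)
include hm

lemma jpVector_succ_one_mul (hrun : JPRun p m α a) (n : ℕ) :
    jpVector m α (n + 1) 1 * (α n m - (a n m : ℚ_[p])) = 1 := by
  obtain ⟨-, hne, hfirst, -⟩ := hrun n
  rw [jpVector_of_mem (left_mem_Icc.2 hm), hfirst, inv_mul_cancel₀ (sub_ne_zero.2 hne)]

lemma norm_jpScale_le (hrun : JPRun p m α a) (n : ℕ) : ‖jpScale m α a n‖ ≤ (p : ℝ)⁻¹ ^ n := by
  have hfactor (j : ℕ) : ‖α j m - (a j m : ℚ_[p])‖ ≤ (p : ℝ)⁻¹ := by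
    rw [← zpow_neg_one, Padic.norm_le_pow_iff_norm_lt_pow_add_one]
    simpa using hrun.norm_sub_lt_one j (right_mem_Icc.2 hm)
  calc ‖jpScale m α a n‖ = ∏ j ∈ range n, ‖α j m - (a j m : ℚ_[p])‖ := norm_prod _ _
    _ ≤ ∏ _j ∈ range n, (p : ℝ)⁻¹ := prod_le_prod (fun _ _ => norm_nonneg _) fun j _ => hfactor j
    _ = (p : ℝ)⁻¹ ^ n := by rw [prod_const, card_range]

lemma norm_jpScale_lt_one (hrun : JPRun p m α a) (hN : 1 ≤ N) : ‖jpScale m α a N‖ < 1 :=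
  (hrun.norm_jpScale_le hm N).trans_lt <|
    pow_lt_one₀ (by positivity) (inv_lt_one_of_one_lt₀ (mod_cast hp.out.one_lt)) (by omega)

lemma isJPOrbit_jpScale_mul_jpVector (hrun : JPRun p m α a) :
    IsJPOrbit m a fun n i => jpScale m α a n * jpVector m α n i where
  first n := by
    rw [jpScale_succ, jpVector_last]
    linear_combination jpScale m α a n * hrun.jpVector_succ_one_mul hm n
  succ n i hi := by
    rw [jpScale_succ, jpVector_last, jpVector_of_mem hi, Rat.smul_def]
    linear_combination jpScale m α a n * hrun.jpVector_succ_mul n hi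

lemma jpScale_mul_jpVector_mem (hrun : JPRun p m α a) {K : IntermediateField ℚ ℚ_[p]}
    (hK : ∀ i ∈ Icc 1 m, α 0 i ∈ K) (n : ℕ) :
    ∀ i ∈ Icc 1 (m + 1), jpScale m α a n * jpVector m α n i ∈ K := by
  refine (hrun.isJPOrbit_jpScale_mul_jpVector hm).forall_of_step (P := fun _ x => x ∈ K)
    (fun i _ => ?_) (fun _ _ => id) (fun n i _ _ _ hx hy => K.sub_mem hx (K.smul_mem hy)) n
  rw [jpScale_zero, one_mul]
  exact jpVector_mem hK i

lemma jpDeviation_eq (hrun : JPRun p m α a) (hu : IsJPOrbit m a u) (n : ℕ) {i : ℕ}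
    (hi : i ∈ Icc 1 m) :
    jpDeviation m α u n i = jpDeviation m α u (n + 1) (i + 1) -
      jpDeviation m α u (n + 1) 1 * (α n i - (a n i : ℚ_[p])) := by
  simp only [jpDeviation, hu.first, hu.succ n i hi, jpVector_of_mem hi, Rat.smul_def]
  linear_combination (u (n + 1) (m + 1) * jpVector m α (n + 1) 1) * hrun.jpVector_succ_mul n hi -
    (u (n + 1) (m + 1) * jpVector m α (n + 1) (i + 1)) * hrun.jpVector_succ_one_mul hm n

lemma norm_jpDeviation_le_of_succ (hrun : JPRun p m α a) (hu : IsJPOrbit m a u) {n : ℕ} {B : ℝ}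
    (hB : ∀ i ∈ Icc 1 (m + 1), ‖jpDeviation m α u (n + 1) i‖ ≤ B) :
    ∀ i ∈ Icc 1 (m + 1), ‖jpDeviation m α u n i‖ ≤ B := by
  intro i hi
  have hfirst := hB 1 (left_mem_Icc.2 (by omega))
  obtain ⟨hi₁, hi₂⟩ := mem_Icc.1 hi
  obtain rfl | hlt := hi₂.eq_or_lt
  · rw [jpDeviation_last, norm_zero]
    exact (norm_nonneg _).trans hfirst
  · have hi' : i ∈ Icc 1 m := mem_Icc.2 (by omega)
    rw [hrun.jpDeviation_eq hm hu n hi', sub_eq_add_neg]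
    refine (Padic.nonarchimedean _ _).trans (max_le (hB _ (mem_Icc.2 (by omega))) ?_)
    rw [norm_neg, norm_mul]
    exact (mul_le_of_le_one_right (norm_nonneg _) (hrun.norm_sub_lt_one n hi').le).trans hfirst

lemma norm_jpDeviation_zero_le (hrun : JPRun p m α a) (hu : IsJPOrbit m a u) {n : ℕ} {B : ℝ}
    (hB : ∀ i ∈ Icc 1 (m + 1), ‖jpDeviation m α u n i‖ ≤ B) :
    ∀ i ∈ Icc 1 (m + 1), ‖jpDeviation m α u 0 i‖ ≤ B := by
  induction n with
  | zero => exact hB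
  | succ n ih => exact ih (hrun.norm_jpDeviation_le_of_succ hm hu hB)

lemma eq_mul_last_of_eigenvector (hrun : JPRun p m α a) (hper : ∀ i ∈ Icc 1 m, α N i = α 0 i)
    (hu : IsJPOrbit m a u) {c : ℚ_[p]} (hc : ‖c‖ < 1)
    (huN : ∀ i ∈ Icc 1 (m + 1), u N i = c * u 0 i) {i : ℕ} (hi : i ∈ Icc 1 m) :
    u 0 i = α 0 i * u 0 (m + 1) := by
  have hlast : m + 1 ∈ Icc 1 (m + 1) := right_mem_Icc.2 (by omega)
  have hdevN : ∀ j ∈ Icc 1 (m + 1), jpDeviation m α u N j = c * jpDeviation m α u 0 j := by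
    intro j hj
    rw [jpDeviation, jpDeviation, jpVector_congr hper, huN j hj, huN _ hlast]
    ring
  obtain ⟨k, hk, hmax⟩ := exists_max_image (Icc 1 (m + 1)) (fun j => ‖jpDeviation m α u 0 j‖)
    ⟨_, hlast⟩
  have hle : ‖jpDeviation m α u 0 k‖ ≤ ‖c‖ * ‖jpDeviation m α u 0 k‖ := by
    refine hrun.norm_jpDeviation_zero_le hm hu (n := N) (fun j hj => ?_) k hk
    rw [hdevN j hj, norm_mul]
    gcongr
    exact hmax j hj
  have hzero : ‖jpDeviation m α u 0 k‖ ≤ 0 := by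
    nlinarith [norm_nonneg (jpDeviation m α u 0 k)]
  have hi0 := norm_le_zero_iff.1 ((hmax i (Icc_subset_Icc_right m.le_succ hi)).trans hzero)
  rwa [jpDeviation, jpVector_of_mem hi, sub_eq_zero] at hi0

lemma mem_of_jpScale_mem (hrun : JPRun p m α a) (hN : 1 ≤ N)
    (hper : ∀ i ∈ Icc 1 m, α N i = α 0 i) {K : IntermediateField ℚ ℚ_[p]}
    (hK : jpScale m α a N ∈ K) : ∀ i ∈ Icc 1 m, α 0 i ∈ K := by
  intro i hi
  obtain ⟨π, hπ⟩ := (Algebra.linearMap K ℚ_[p]).exists_leftInverse_of_injective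
    (LinearMap.ker_eq_bot.2 (algebraMap K ℚ_[p]).injective)
  have hπ1 : π 1 = 1 := by simpa using LinearMap.congr_fun hπ 1
  have hπN (j : ℕ) :
      (π (jpScale m α a N * jpVector m α N j) : ℚ_[p]) =
        jpScale m α a N * π (jpVector m α 0 j) := by
    rw [jpVector_congr hper]
    exact congrArg Subtype.val (π.map_smul ⟨_, hK⟩ _)
  have horbit : IsJPOrbit m a fun n j => (π (jpScale m α a n * jpVector m α n j) : ℚ_[p]) :=
    (hrun.isJPOrbit_jpScale_mul_jpVector hm).map (K.val.toLinearMap ∘ₗ π.restrictScalars ℚ)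
  have hfixed := hrun.eq_mul_last_of_eigenvector hm hper horbit (hrun.norm_jpScale_lt_one hm hN)
    (fun j _ => by rw [hπN, jpScale_zero, one_mul]) hi
  simp only [jpScale_zero, one_mul, jpVector_last, jpVector_of_mem hi, hπ1, K.coe_one,
    mul_one] at hfixed
  exact hfixed ▸ (π (α 0 i)).2

lemma jpScale_mem_iff (hrun : JPRun p m α a) (hN : 1 ≤ N) (hper : ∀ i ∈ Icc 1 m, α N i = α 0 i)
    (K : IntermediateField ℚ ℚ_[p]) : jpScale m α a N ∈ K ↔ ∀ i ∈ Icc 1 m, α 0 i ∈ K := by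
  refine ⟨hrun.mem_of_jpScale_mem hm hN hper, fun h => ?_⟩
  simpa only [jpVector_last, mul_one] using
    hrun.jpScale_mul_jpVector_mem hm h N (m + 1) (right_mem_Icc.2 (by omega))

lemma exists_notMem_bot_of_norm_le (hrun : JPRun p m α a) {c : ℝ} (hcp : c + 1 < p)
    (ha : ∀ n, ∀ i ∈ Icc 1 m, ‖a n i‖ ≤ c) :
    ∃ i ∈ Icc 1 m, α 0 i ∉ (⊥ : IntermediateField ℚ ℚ_[p]) := by
  by_contra! hrat
  have hc : 0 ≤ c := (norm_nonneg _).trans (ha 0 1 (left_mem_Icc.2 hm))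
  have hscaled : ∀ n, ∀ i ∈ Icc 1 (m + 1), ∃ q : ℚ,
      (q : ℚ_[p]) = jpScale m α a n * jpVector m α n i := fun n i hi =>
    IntermediateField.mem_bot.1 (hrun.jpScale_mul_jpVector_mem hm hrat n i hi)
  choose! q hq using hscaled
  have hlast (n : ℕ) : (q n (m + 1) : ℚ_[p]) = jpScale m α a n := by
    rw [hq n _ (right_mem_Icc.2 (by omega)), jpVector_last, mul_one]
  have horbit : IsJPOrbit m a q := (hrun.isJPOrbit_jpScale_mul_jpVector hm).of_map
    (f := Algebra.linearMap ℚ ℚ_[p]) (algebraMap ℚ ℚ_[p]).injective hq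
  obtain ⟨n, hn⟩ := horbit.exists_last_eq_zero hc hcp ha (fun n i hi => ((hrun n).1 i hi).1)
    fun n => hlast n ▸ hrun.norm_jpScale_le hm n
  exact hrun.jpScale_ne_zero n (by rw [← hlast, hn, Rat.cast_zero])

lemma comp_mod (hrun : JPRun p m α a) (hN : 1 ≤ N) (hper : ∀ i ∈ Icc 1 m, α N i = α 0 i) :
    JPRun p m (fun n => α (n % N)) (fun n => a (n % N)) := by
  intro n
  have hsucc : ∀ i ∈ Icc 1 m, α ((n + 1) % N) i = α (n % N + 1) i := by
    intro i hi
    rw [← Nat.mod_add_mod]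
    obtain hlt | heq := (Nat.add_one_le_iff.2 (Nat.mod_lt n hN)).lt_or_eq
    · rw [Nat.mod_eq_of_lt hlt]
    · rw [heq, Nat.mod_self, hper i hi]
  obtain ⟨hval, hne, hfirst, hrest⟩ := hrun (n % N)
  refine ⟨hval, hne, (hsucc 1 (left_mem_Icc.2 hm)).trans hfirst, fun i hi => ?_⟩
  exact (hsucc i (Icc_subset_Icc_left one_le_two hi)).trans (hrest i hi)

lemma exists_norm_le (hrun : JPRun p m α a) (hN : 1 ≤ N) :
    ∃ c : ℝ, c < p / 2 ∧ ∀ n < N, ∀ i ∈ Icc 1 m, ‖a n i‖ ≤ c := by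
  obtain ⟨⟨k, l⟩, hkl, hmax⟩ := exists_max_image (range N ×ˢ Icc 1 m) (fun x => ‖a x.1 x.2‖)
    ⟨(0, 1), mem_product.2 ⟨mem_range.2 hN, left_mem_Icc.2 hm⟩⟩
  refine ⟨‖a k l‖, ?_, fun n hn i hi => hmax (n, i) (mem_product.2 ⟨mem_range.2 hn, hi⟩)⟩
  have hlt := ((hrun k).1 l (mem_product.1 hkl).2).2.1
  rw [← Rat.norm_cast_real, Real.norm_eq_abs]
  simpa using (Rat.cast_lt (K := ℝ)).2 hlt

lemma exists_notMem_bot (hrun : JPRun p m α a) (hN : 1 ≤ N)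
    (hper : ∀ i ∈ Icc 1 m, α N i = α 0 i) :
    ∃ i ∈ Icc 1 m, α 0 i ∉ (⊥ : IntermediateField ℚ ℚ_[p]) := by
  obtain ⟨c, hc, ha⟩ := hrun.exists_norm_le hm hN
  have hp2 : (2 : ℝ) ≤ p := mod_cast hp.out.two_le
  have := (hrun.comp_mod hm hN hper).exists_notMem_bot_of_norm_le hm (c := c) (by linarith)
    fun n => ha _ (Nat.mod_lt n hN)
  simpa only [Nat.zero_mod] using this

end JPRun

end Runs

theorem jacobiPerron_periodic_field_generated_general {p m N : ℕ} [Fact p.Prime] (hm : 1 ≤ m)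
    (hN : 1 ≤ N) {α : ℕ → ℕ → ℚ_[p]} {a : ℕ → ℕ → ℚ} (hrun : JPRun p m α a)
    (hper : ∀ i ∈ Icc 1 m, α N i = α 0 i) {μ : ℚ_[p]} (hμ : μ = ∏ j ∈ range N, α j 1) :
    IntermediateField.adjoin ℚ ({μ} : Set ℚ_[p]) =
      IntermediateField.adjoin ℚ {x : ℚ_[p] | ∃ i ∈ Icc 1 m, x = α 0 i} ∧
    μ ∉ Set.range ((↑) : ℚ → ℚ_[p]) := by
  have hμ_inv : μ = (jpScale m α a N)⁻¹ :=
    hμ.trans (hrun.prod_eq_inv_jpScale (hper 1 (left_mem_Icc.2 hm)))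
  have hmem (K : IntermediateField ℚ ℚ_[p]) : μ ∈ K ↔ ∀ i ∈ Icc 1 m, α 0 i ∈ K := by
    rw [hμ_inv, inv_mem_iff, hrun.jpScale_mem_iff hm hN hper]
  refine ⟨le_antisymm ?_ ?_, fun hrat => ?_⟩
  · rw [IntermediateField.adjoin_simple_le_iff, hmem]
    exact fun i hi => IntermediateField.subset_adjoin _ _ ⟨i, hi, rfl⟩
  · rw [IntermediateField.adjoin_le_iff]
    rintro _ ⟨i, hi, rfl⟩
    exact (hmem _).1 (IntermediateField.mem_adjoin_simple_self ℚ μ) i hi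
  · obtain ⟨i, hi, hirr⟩ := hrun.exists_notMem_bot hm hN hper
    exact hirr ((hmem ⊥).1 (IntermediateField.mem_bot.2 hrat) i hi)

/-- For a purely periodic run with period `N` and
`μ = α₀⁽¹⁾α₁⁽¹⁾⋯α_{N-1}⁽¹⁾ ∈ ℚ_p`, one has `ℚ(μ) = ℚ(α₀⁽¹⁾, …, α₀⁽ᵐ⁾)` (as subfields of
`ℚ_p`), and `μ ∉ ℚ`. -/
theorem jacobiPerron_periodic_field_generated (p m N : ℕ) [hp : Fact p.Prime]
    (hp2 : 2 < p) (hm : 1 ≤ m) (hN : 1 ≤ N)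
    (α : ℕ → ℕ → ℚ_[p]) (a : ℕ → ℕ → ℚ) (A : ℤ → ℕ → ℚ)
    (hrun : JPRun p m α a) (hconv : JPConv m a A)
    (hper : ∀ n : ℕ, ∀ i ∈ Finset.Icc 1 m, α (n + N) i = α n i ∧ a (n + N) i = a n i)
    (μ : ℚ_[p]) (hμ : μ = ∏ j ∈ Finset.range N, α j 1) :
    IntermediateField.adjoin ℚ ({μ} : Set ℚ_[p]) =
      IntermediateField.adjoin ℚ {x : ℚ_[p] | ∃ i ∈ Finset.Icc 1 m, x = α 0 i} ∧
    μ ∉ Set.range ((↑) : ℚ → ℚ_[p]) := by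
  exact jacobiPerron_periodic_field_generated_general hm hN hrun
    (fun i hi => by simpa using (hper 0 i hi).1) hμ
end

section
/- For a purely periodic run of the p-adic Jacobi–Perron algorithm with period N = 1, the characteristic polynomial P(X) has no rational root. In particular, when m = 2 the polynomial P(X) (of degree 3) is irreducible over ℚ, and the field ℚ(α_0^{(1)}, α_0^{(2)}) has degree 3 over ℚ. -/
open Finset Filter

/-!
The matrix `M` is the companion matrix of `P = X ^ (m + 1) - a 1 * X ^ m - ⋯ - a m * X - 1`, where
the `a i` are the constant partial quotients. Since `P` is monic over `ℤ[1/p]` with constant term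
`-1`, a rational root `q` is a unit of `ℤ[1/p]`, that is `± p ^ k`. The coefficients of `P` are at
most `p - 1` in absolute value, so Cauchy's bound for `P` and for its reverse gives
`1 / p < |q| < p`, whence `q = ± 1`. But `a 1` is `p`-adically strictly larger than all other
coefficients, so a single term dominates the value of `P` at `± 1`, which cannot vanish.

For the field degree, `(α 1, …, α m, 1)` is an eigenvector of `M` for the eigenvalue `α 1`, and
`α 1` generates the field because each complete quotient is expressed through the previous one
and `α 1`.
-/

open Polynomial

section ZInv

variable (p : ℕ)

/-- The ring `ℤ[1/p]`, realised as a subring of `ℚ` so that the rational root theorem applies to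
polynomials with coefficients in it. -/
def zInvSubring [NeZero p] : Subring ℚ where
  carrier := {q | InZInvP p q}
  one_mem' := ⟨1, 0, by simp⟩
  zero_mem' := ⟨0, 0, by simp⟩
  neg_mem' := by
    rintro _ ⟨z, k, rfl⟩
    exact ⟨-z, k, by rw [Int.cast_neg, neg_div]⟩
  mul_mem' := by
    rintro _ _ ⟨z, k, rfl⟩ ⟨w, l, rfl⟩
    exact ⟨z * w, k + l, by rw [Int.cast_mul, pow_add, div_mul_div_comm]⟩
  add_mem' := by
    rintro _ _ ⟨z, k, rfl⟩ ⟨w, l, rfl⟩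
    have hp : (p : ℚ) ≠ 0 := NeZero.ne _
    refine ⟨z * p ^ l + p ^ k * w, k + l, ?_⟩
    rw [div_add_div _ _ (pow_ne_zero k hp) (pow_ne_zero l hp), ← pow_add]
    push_cast
    rfl

instance [NeZero p] : IsLocalization.Away (p : ℤ) (zInvSubring p) := by
  have hp : (p : ℚ) ≠ 0 := NeZero.ne _
  refine .mk _ (.of_mul_eq_one ⟨(p : ℚ)⁻¹, 1, 1, by simp⟩ ?_) ?_ fun a b hab => ⟨0, ?_⟩
  · ext
    simp [hp]
  · rintro ⟨_, z, k, rfl⟩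
    refine ⟨k, z, ?_⟩
    ext
    simp [hp]
  · simpa using hab

instance [NeZero p] : UniqueFactorizationMonoid (zInvSubring p) :=
  .of_isLocalization (Submonoid.powers (p : ℤ)) _

instance [NeZero p] : IsFractionRing (zInvSubring p) ℚ :=
  .isFractionRing_of_isDomain_of_isLocalization (Submonoid.powers (p : ℤ)) _ ℚ

variable {p}

theorem abs_eq_zpow_of_isUnit_zInvSubring [hp : Fact p.Prime] {u : zInvSubring p} (hu : IsUnit u) :
    ∃ k : ℤ, |(u : ℚ)| = (p : ℚ) ^ k := by
  have hp0 : (p : ℚ) ≠ 0 := NeZero.ne _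
  obtain ⟨q, z, k, rfl⟩ := u
  have hz : IsUnit (algebraMap ℤ (zInvSubring p) z) := by
    convert hu.mul ((IsLocalization.Away.algebraMap_isUnit (p : ℤ)).pow k)
    ext
    simp [hp0]
  obtain ⟨n, hn⟩ := (IsLocalization.Away.algebraMap_isUnit_iff (p : ℤ)).1 hz
  obtain ⟨s, -, hs⟩ := (Nat.dvd_prime_pow hp.out).1
    (by simpa [Int.natAbs_pow] using Int.natAbs_dvd_natAbs.2 hn : z.natAbs ∣ p ^ n)
  refine ⟨s - k, ?_⟩
  rw [abs_div, ← Int.cast_abs, Int.abs_eq_natAbs, hs, zpow_sub₀ hp0]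
  simp

theorem abs_eq_zpow_of_isRoot [Fact p.Prime] {P : ℚ[X]} (hP : P.Monic)
    (hint : ∀ i, InZInvP p (P.coeff i)) (h0 : |P.coeff 0| = 1) {q : ℚ} (hq : P.IsRoot q) :
    ∃ k : ℤ, |q| = (p : ℚ) ^ k := by
  have hsub : (P.coeffs : Set ℚ) ⊆ zInvSubring p := fun c hc => by
    obtain ⟨i, -, rfl⟩ := mem_coeffs_iff.1 hc
    exact hint i
  have hroot : aeval q (P.toSubring _ hsub) = 0 := by
    have hmap : (P.toSubring _ hsub).map (algebraMap (zInvSubring p) ℚ) = P := map_toSubring ..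
    rwa [aeval_def, ← eval_map, hmap]
  obtain ⟨u, rfl, hu⟩ := exists_integer_of_is_root_of_monic ((monic_toSubring ..).2 hP) hroot
  refine abs_eq_zpow_of_isUnit_zInvSubring (isUnit_of_dvd_unit hu ?_)
  refine .of_mul_eq_one ((P.toSubring _ hsub).coeff 0) (Subtype.ext ?_)
  simpa [h0] using (abs_mul_abs_self (P.coeff 0)).symm

end ZInv

section RootBounds

variable {K : Type*} [NormedField K] {P : K[X]} {B : ℝ} {x : K}

theorem norm_lt_of_isRoot (hlead : ‖P.leadingCoeff‖ = 1) (hB : ∀ i, ‖P.coeff i‖ ≤ B)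
    (hx : P.IsRoot x) : ‖x‖ < B + 1 := by
  have hP : P ≠ 0 := by rintro rfl; simp at hlead
  have hB0 : 0 ≤ B := (norm_nonneg _).trans (hB 0)
  lift B to NNReal using hB0
  have hlead' : ‖P.leadingCoeff‖₊ = 1 := NNReal.eq hlead
  have hcauchy : P.cauchyBound ≤ B + 1 := by
    rw [cauchyBound, hlead', div_one]
    gcongr
    exact Finset.sup_le fun i _ => hB i
  exact_mod_cast (hx.norm_lt_cauchyBound hP).trans_le hcauchy

theorem norm_inv_lt_of_isRoot (h0 : ‖P.coeff 0‖ = 1) (hB : ∀ i, ‖P.coeff i‖ ≤ B)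
    (hx : P.IsRoot x) : ‖x⁻¹‖ < B + 1 := by
  have hP0 : P.coeff 0 ≠ 0 := norm_ne_zero_iff.1 (h0 ▸ one_ne_zero)
  have hx0 : x ≠ 0 := by
    rintro rfl
    exact hP0 (coeff_zero_eq_eval_zero P ▸ hx)
  let := invertibleOfNonzero hx0
  refine norm_lt_of_isRoot (P := P.reverse) ?_ (fun i => ?_) ?_
  · rwa [reverse_leadingCoeff, trailingCoeff_eq_coeff_zero hP0]
  · rw [coeff_reverse]
    exact hB _
  · rw [← invOf_eq_inv]
    exact (eval₂_reverse_eq_zero_iff (RingHom.id K) x P).2 hx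

theorem eval_ne_zero_of_dominant_coeff [IsUltrametricDist K] {j : ℕ}
    (hj : ∀ i ≠ j, ‖P.coeff i‖ < ‖P.coeff j‖) (hx : ‖x‖ = 1) : P.eval x ≠ 0 := by
  have hterm : ∀ i, ‖P.coeff i * x ^ i‖ = ‖P.coeff i‖ := fun i => by
    rw [norm_mul, norm_pow, hx, one_pow, mul_one]
  have hj0 : 0 < ‖P.coeff j‖ := (norm_nonneg _).trans_lt (hj (j + 1) j.succ_ne_self)
  have hjdeg : j ∈ Finset.range (P.natDegree + 1) :=
    Finset.mem_range_succ_iff.2 (le_natDegree_of_ne_zero (norm_pos_iff.1 hj0))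
  rw [← norm_pos_iff, eval_eq_sum_range,
    IsUltrametricDist.isNonarchimedean_norm.apply_sum_eq_of_lt (fun a => (norm_neg a).symm) hjdeg,
    hterm]
  · exact hj0
  · intro i _ hij
    simpa only [hterm] using hj i hij

end RootBounds

section NoRationalRoot

variable {p : ℕ} [hp : Fact p.Prime] {P : ℚ[X]} {q : ℚ}

theorem abs_eq_one_of_isRoot (hP : P.Monic) (h0 : |P.coeff 0| = 1)
    (hint : ∀ i, InZInvP p (P.coeff i)) (hB : ∀ i, |P.coeff i| ≤ p - 1)
    (hq : P.IsRoot q) : |q| = 1 := by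
  obtain ⟨k, hk⟩ := abs_eq_zpow_of_isRoot hP hint h0 hq
  have hnorm : ∀ r : ℚ, ‖r‖ = (|r| : ℚ) := fun r => by
    rw [← Rat.norm_cast_real, Real.norm_eq_abs, Rat.cast_abs]
  have hB' : ∀ i, ‖P.coeff i‖ ≤ (p - 1 : ℝ) := fun i => by
    rw [hnorm]; exact_mod_cast hB i
  have hlt : |q| < p := by
    have := norm_lt_of_isRoot (by simp [hP.leadingCoeff]) hB' hq
    rw [sub_add_cancel, hnorm] at this
    exact_mod_cast this
  have hlt_inv : |q|⁻¹ < p := by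
    have := norm_inv_lt_of_isRoot (by simp [hnorm, h0]) hB' hq
    rw [sub_add_cancel, hnorm, abs_inv] at this
    exact_mod_cast this
  have hp1 : (1 : ℚ) < p := mod_cast hp.out.one_lt
  rw [hk] at hlt hlt_inv
  rw [← zpow_neg] at hlt_inv
  have hk1 : k < 1 := (zpow_lt_zpow_iff_right₀ hp1).1 (by simpa using hlt)
  have hk2 : -k < 1 := (zpow_lt_zpow_iff_right₀ hp1).1 (by simpa using hlt_inv)
  rw [hk, show k = 0 by lia, zpow_zero]

theorem not_isRoot_of_dominant_coeff (hP : P.Monic) (h0 : |P.coeff 0| = 1)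
    (hint : ∀ i, InZInvP p (P.coeff i)) (hB : ∀ i, |P.coeff i| ≤ p - 1) {j : ℕ}
    (hj : ∀ i ≠ j, ‖(P.coeff i : ℚ_[p])‖ < ‖(P.coeff j : ℚ_[p])‖) : ¬ P.IsRoot q := by
  intro hq
  have hqnorm : ‖(q : ℚ_[p])‖ = 1 := by
    rcases (abs_eq zero_le_one).1 (abs_eq_one_of_isRoot hP h0 hint hB hq) with rfl | rfl <;> simp
  refine eval_ne_zero_of_dominant_coeff (P := P.map (algebraMap ℚ ℚ_[p])) (j := j)
    (by simpa using hj) hqnorm ?_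
  simpa using hq.map (f := algebraMap ℚ ℚ_[p])

end NoRationalRoot

section Companion

variable {R : Type*} [CommRing R] {n : ℕ}

/-- The companion matrix of the recurrence `A k = b 0 * A (k - 1) + ⋯ + b n * A (k - n - 1)`: right
multiplication by it takes the row `(A (k - 1), …, A (k - n - 1))` to `(A k, …, A (k - n))`. -/
def companionMatrix (b : Fin (n + 1) → R) : Matrix (Fin (n + 1)) (Fin (n + 1)) R :=
  .of fun i => Fin.cons (b i) fun j => if i = j.castSucc then 1 else 0

theorem companionMatrix_zero (b : Fin (n + 1) → R) (i : Fin (n + 1)) :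
    companionMatrix b i 0 = b i := rfl

theorem companionMatrix_succ (b : Fin (n + 1) → R) (i : Fin (n + 1)) (j : Fin n) :
    companionMatrix b i j.succ = if i = j.castSucc then 1 else 0 := rfl

-- Horner's scheme: the row vector `(X ^ n, …, X, 1)` clears all columns but the first.
theorem sum_pow_smul_charmatrix_companionMatrix (b : Fin (n + 1) → R) :
    ∑ i, (X ^ (i.rev : ℕ) : R[X]) • (companionMatrix b).charmatrix i =
      Pi.single 0 (X ^ (n + 1) - ∑ i, C (b i) * X ^ (i.rev : ℕ)) := by
  ext1 j
  simp only [Finset.sum_apply, Pi.smul_apply, smul_eq_mul, Matrix.charmatrix_apply, mul_sub,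
    Finset.sum_sub_distrib, Matrix.diagonal_apply, mul_ite, mul_zero, Finset.sum_ite_eq',
    Finset.mem_univ, if_true]
  cases j using Fin.cases with
  | zero =>
    simp only [Pi.single_eq_same, companionMatrix_zero, Fin.rev_zero, Fin.val_last, ← pow_succ,
      X_pow_mul_C]
  | succ j =>
    have hj : (j.castSucc.rev : ℕ) = (j.succ.rev : ℕ) + 1 := by
      simp only [Fin.val_rev, Fin.val_castSucc, Fin.val_succ]
      lia
    simp only [companionMatrix_succ, apply_ite C, map_one, map_zero, mul_ite, mul_one, mul_zero,
      Finset.sum_ite_eq', Finset.mem_univ, if_true, hj, pow_succ, sub_self, ne_eq,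
      Fin.succ_ne_zero, not_false_eq_true, Pi.single_eq_of_ne]

theorem det_charmatrix_companionMatrix_submatrix (b : Fin (n + 1) → R) :
    ((companionMatrix b).charmatrix.submatrix Fin.castSucc Fin.succ).det = (-1) ^ n := by
  rw [Matrix.det_of_isLowerTriangular]
  · simp [companionMatrix_succ, Fin.castSucc_lt_succ.ne]
  · intro i j hij
    have hij' : i < j := hij
    simp [companionMatrix_succ, (Fin.castSucc_lt_succ_iff.2 hij'.le).ne, hij'.ne]

theorem charpoly_companionMatrix (b : Fin (n + 1) → R) :
    (companionMatrix b).charpoly = X ^ (n + 1) - ∑ i, C (b i) * X ^ (i.rev : ℕ) := by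
  have hdet :=
    (companionMatrix b).charmatrix.det_updateRow_sum (Fin.last n) fun k => X ^ (k.rev : ℕ)
  rw [sum_pow_smul_charmatrix_companionMatrix, Matrix.det_succ_row _ (Fin.last n),
    Finset.sum_eq_single_of_mem 0 (Finset.mem_univ _) fun j _ hj => by simp [hj],
    Matrix.submatrix_updateRow_succAbove, Fin.succAbove_last, Fin.succAbove_zero,
    det_charmatrix_companionMatrix_submatrix] at hdet
  rw [Fin.val_zero, add_zero, Fin.val_last, mul_right_comm, ← mul_pow] at hdet
  simpa [Matrix.charpoly] using hdet.symm

theorem coeff_rev_charpoly_companionMatrix (b : Fin (n + 1) → R) (i : Fin (n + 1)) :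
    (companionMatrix b).charpoly.coeff i.rev = -b i := by
  simp only [charpoly_companionMatrix, coeff_sub, coeff_X_pow, i.rev.2.ne, if_false,
    finsetSum_coeff, coeff_C_mul_X_pow, Fin.val_inj, Fin.rev_inj, Finset.sum_ite_eq,
    Finset.mem_univ, if_true, zero_sub]

theorem coeff_charpoly_companionMatrix_of_lt (b : Fin (n + 1) → R) {k : ℕ} (hk : n < k) :
    (companionMatrix b).charpoly.coeff k = if k = n + 1 then 1 else 0 := by
  have hne (i : Fin (n + 1)) : k ≠ i.rev := fun h => by lia
  simp only [charpoly_companionMatrix, coeff_sub, coeff_X_pow, finsetSum_coeff,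
    coeff_C_mul_X_pow, hne, if_false, Finset.sum_const_zero, sub_zero]

end Companion

theorem aeval_charpoly_eq_zero_of_mulVec_eq_smul {R S ι : Type*} [CommRing R] [CommRing S]
    [IsDomain S] [Algebra R S] [Fintype ι] [DecidableEq ι] {M : Matrix ι ι R} {v : ι → S} {θ : S}
    (hv : v ≠ 0) (h : (M.map (algebraMap R S)).mulVec v = θ • v) : aeval θ M.charpoly = 0 := by
  rw [aeval_def, ← eval_map, ← Matrix.charpoly_map, Matrix.eval_charpoly]
  refine Matrix.exists_mulVec_eq_zero_iff.1 ⟨v, hv, ?_⟩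
  rw [Matrix.sub_mulVec, h, Matrix.scalar_apply, ← Matrix.smul_one_eq_diagonal, Matrix.smul_mulVec,
    Matrix.one_mulVec, sub_self]

section JacobiPerron

variable {p : ℕ} [Fact p.Prime] {m : ℕ}

/-- `x 1, …, x m` are complete quotients which the Jacobi–Perron step with partial quotients
`b 1, …, b m` maps to themselves. Both sequences are continued by `x (m + 1) = b (m + 1) = 1`, so
that `x 1 = 1 / (x m - b m)` becomes one more instance of `step`. -/
structure IsJPFixedPoint (p : ℕ) [Fact p.Prime] (m : ℕ) (x : ℕ → ℚ_[p]) (b : ℕ → ℚ) : Prop where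
  isSValue : ∀ i ∈ Finset.Icc 1 m, IsSValue p (x i) (b i)
  step : ∀ i ∈ Finset.Icc 1 m, x (i + 1) = (x i - b i) * x 1
  quotient_last : x (m + 1) = 1
  digit_last : b (m + 1) = 1

theorem JPRun.isJPFixedPoint {α : ℕ → ℕ → ℚ_[p]} {a : ℕ → ℕ → ℚ}
    (hrun : JPRun p m α a) (hm : 1 ≤ m) (hper : ∀ i ∈ Finset.Icc 1 m, α 1 i = α 0 i) :
    IsJPFixedPoint p m (Function.update (α 0) (m + 1) 1) (Function.update (a 0) (m + 1) 1) := by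
  obtain ⟨hS, hne, hfirst, hnext⟩ := hrun 0
  rw [zero_add, hper 1 (Finset.left_mem_Icc.2 hm)] at hfirst
  have hupd {β : Type} [One β] (f : ℕ → β) {i : ℕ} (hi : i ∈ Finset.Icc 1 m) :
      Function.update f (m + 1) 1 i = f i :=
    Function.update_of_ne (by have := Finset.mem_Icc.1 hi; lia) _ _
  refine ⟨fun i hi => ?_, fun i hi => ?_, Function.update_self .., Function.update_self ..⟩
  · rw [hupd _ hi, hupd _ hi]
    exact hS i hi
  · rw [hupd _ hi, hupd _ hi, hupd _ (Finset.left_mem_Icc.2 hm), hfirst, ← div_eq_mul_inv]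
    obtain ⟨h1, him⟩ := Finset.mem_Icc.1 hi
    obtain rfl | hlt := him.eq_or_lt
    · rw [Function.update_self, div_self (sub_ne_zero.2 hne)]
    · have hi' : i + 1 ∈ Finset.Icc 1 m := Finset.mem_Icc.2 ⟨by lia, by lia⟩
      rw [hupd _ hi', ← hper _ hi']
      exact hnext (i + 1) (Finset.mem_Icc.2 ⟨by lia, by lia⟩)

theorem JPConv.apply_zero {a : ℕ → ℕ → ℚ} {A : ℤ → ℕ → ℚ} (hconv : JPConv m a A) {i : ℕ}
    (hi : i ∈ Finset.Icc 1 (m + 1)) : A 0 i = Function.update (a 0) (m + 1) 1 i := by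
  obtain ⟨hinit, hrec⟩ := hconv
  have hlast : A (0 - m - 1) i = if i = m + 1 then 1 else 0 := by
    rw [← hinit i hi (m + 1) (by simp)]
    congr 1
    push_cast
    ring
  have hsum : ∑ j ∈ Finset.Icc 1 m, a 0 j * A (0 - j) i =
      if i ∈ Finset.Icc 1 m then a 0 i else 0 := by
    rw [← Finset.sum_ite_eq (Finset.Icc 1 m) i (a 0)]
    refine Finset.sum_congr rfl fun j hj => ?_
    rw [zero_sub, hinit i hi j (Finset.Icc_subset_Icc_right m.le_succ hj), mul_ite, mul_one,
      mul_zero]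
  have hzero := hrec 0 i hi
  rw [Nat.cast_zero, hlast, hsum] at hzero
  rw [hzero, Function.update_apply]
  obtain ⟨h1, him⟩ := Finset.mem_Icc.1 hi
  obtain rfl | hlt := him.eq_or_lt
  · simp
  · rw [if_pos (Finset.mem_Icc.2 ⟨h1, Nat.le_of_lt_succ hlt⟩), if_neg hlt.ne, if_neg hlt.ne,
      add_zero]

/-- The matrix of convergents of a Jacobi–Perron run of period one with partial quotients
`b 1, …, b m`, where `b (m + 1) = 1`. -/
abbrev jpMatrix (m : ℕ) (b : ℕ → ℚ) : Matrix (Fin (m + 1)) (Fin (m + 1)) ℚ :=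
  companionMatrix fun i => b (i + 1)

theorem coeff_charpoly_jpMatrix (b : ℕ → ℚ) {k : ℕ} (hk : k ≤ m) :
    (jpMatrix m b).charpoly.coeff k = -b (m + 1 - k) := by
  have hcoeff := coeff_rev_charpoly_companionMatrix (fun i : Fin (m + 1) => b (i + 1))
    (Fin.rev ⟨k, Nat.lt_succ_of_le hk⟩)
  rwa [Fin.rev_rev, Fin.val_rev, Nat.add_sub_add_right, ← Nat.sub_add_comm hk] at hcoeff

theorem JPConv.eq_jpMatrix {a : ℕ → ℕ → ℚ} {A : ℤ → ℕ → ℚ} (hconv : JPConv m a A)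
    {M : Matrix (Fin (m + 1)) (Fin (m + 1)) ℚ}
    (hM : ∀ i j : Fin (m + 1), M i j = A ((1 : ℤ) - ((j : ℕ) + 1)) ((i : ℕ) + 1)) :
    M = jpMatrix m (Function.update (a 0) (m + 1) 1) := by
  ext i j
  have hi : (i : ℕ) + 1 ∈ Finset.Icc 1 (m + 1) := Finset.mem_Icc.2 ⟨by lia, by lia⟩
  rw [hM, jpMatrix]
  cases j using Fin.cases with
  | zero =>
    rw [companionMatrix_zero, Fin.val_zero, Nat.cast_zero, zero_add, sub_self,
      hconv.apply_zero hi]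
  | succ j =>
    have hj : (j : ℕ) + 1 ∈ Finset.Icc 1 (m + 1) := Finset.mem_Icc.2 ⟨by lia, by lia⟩
    rw [companionMatrix_succ, Fin.val_succ, sub_add_cancel_right, hconv.1 _ hi _ hj]
    simp [Fin.ext_iff]

namespace IsJPFixedPoint

variable {x : ℕ → ℚ_[p]} {b : ℕ → ℚ}

theorem one_lt_norm_first (h : IsJPFixedPoint p m x b) (hm : 1 ≤ m) : 1 < ‖x 1‖ := by
  have hmm : m ∈ Finset.Icc 1 m := Finset.right_mem_Icc.2 hm
  have hmul : (x m - b m) * x 1 = 1 := (h.step m hmm).symm.trans h.quotient_last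
  rw [eq_inv_of_mul_eq_one_right hmul, norm_inv]
  exact (one_lt_inv₀ (norm_pos_iff.2 (left_ne_zero_of_mul_eq_one hmul))).2 (h.isSValue m hmm).2.2

theorem norm_digit_first (h : IsJPFixedPoint p m x b) (hm : 1 ≤ m) : ‖(b 1 : ℚ_[p])‖ = ‖x 1‖ := by
  have hdist := (h.isSValue 1 (Finset.left_mem_Icc.2 hm)).2.2
  exact (Padic.norm_eq_of_norm_sub_lt_left (hdist.trans (h.one_lt_norm_first hm))).symm

theorem norm_digit_lt (h : IsJPFixedPoint p m x b) (hm : 1 ≤ m) {i : ℕ}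
    (hi : i ∈ Finset.Icc 2 (m + 1)) : ‖(b i : ℚ_[p])‖ < ‖(b 1 : ℚ_[p])‖ := by
  rw [h.norm_digit_first hm]
  have hx1 := h.one_lt_norm_first hm
  obtain ⟨h2, him⟩ := Finset.mem_Icc.1 hi
  obtain rfl | hlt := him.eq_or_lt
  · simpa [h.digit_last] using hx1
  obtain ⟨k, rfl⟩ : ∃ k, i = k + 1 := ⟨i - 1, by lia⟩
  have hk : k ∈ Finset.Icc 1 m := Finset.mem_Icc.2 ⟨by lia, by lia⟩
  have hxk : ‖x (k + 1)‖ < ‖x 1‖ := by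
    rw [h.step k hk, norm_mul]
    exact mul_lt_of_lt_one_left (by linarith) (h.isSValue k hk).2.2
  have hdist : ‖b (k + 1) - x (k + 1)‖ < ‖x 1‖ := by
    rw [norm_sub_rev]
    exact (h.isSValue (k + 1) (Finset.mem_Icc.2 ⟨by lia, by lia⟩)).2.2.trans hx1
  rw [← sub_add_cancel (b (k + 1) : ℚ_[p]) (x (k + 1))]
  exact (Padic.nonarchimedean _ _).trans_lt (max_lt hdist hxk)

theorem inZInvP_digit (h : IsJPFixedPoint p m x b) {i : ℕ} (hi : i ∈ Finset.Icc 1 (m + 1)) :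
    InZInvP p (b i) := by
  obtain ⟨h1, him⟩ := Finset.mem_Icc.1 hi
  obtain rfl | hlt := him.eq_or_lt
  · rw [h.digit_last]
    exact one_mem (zInvSubring p)
  · exact (h.isSValue i (Finset.mem_Icc.2 ⟨h1, Nat.le_of_lt_succ hlt⟩)).1

theorem abs_digit_le (h : IsJPFixedPoint p m x b) {i : ℕ} (hi : i ∈ Finset.Icc 1 (m + 1)) :
    |b i| ≤ p - 1 := by
  have hp : (2 : ℚ) ≤ p := mod_cast (Fact.out : p.Prime).two_le
  obtain ⟨h1, him⟩ := Finset.mem_Icc.1 hi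
  obtain rfl | hlt := him.eq_or_lt
  · rw [h.digit_last, abs_one]
    linarith
  · linarith [(h.isSValue i (Finset.mem_Icc.2 ⟨h1, Nat.le_of_lt_succ hlt⟩)).2.1]

theorem not_isRoot_charpoly (h : IsJPFixedPoint p m x b) (hm : 1 ≤ m) (q : ℚ) :
    ¬ (jpMatrix m b).charpoly.IsRoot q := by
  have hp : (2 : ℚ) ≤ p := mod_cast (Fact.out : p.Prime).two_le
  have hindex {k : ℕ} (hk : k ≤ m) : m + 1 - k ∈ Finset.Icc 1 (m + 1) :=
    Finset.mem_Icc.2 ⟨by lia, by lia⟩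
  refine not_isRoot_of_dominant_coeff (p := p) (j := m) (Matrix.charpoly_monic _) ?_
    (fun k => ?_) (fun k => ?_) (fun k hkm => ?_)
  · rw [coeff_charpoly_jpMatrix b m.zero_le, Nat.sub_zero, h.digit_last, abs_neg, abs_one]
  · obtain hk | hk := le_or_gt k m
    · rw [coeff_charpoly_jpMatrix b hk]
      exact (zInvSubring p).neg_mem (h.inZInvP_digit (hindex hk))
    · rw [coeff_charpoly_companionMatrix_of_lt _ hk]
      split_ifs
      exacts [(zInvSubring p).one_mem, (zInvSubring p).zero_mem]
  · obtain hk | hk := le_or_gt k m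
    · rw [coeff_charpoly_jpMatrix b hk, abs_neg]
      exact h.abs_digit_le (hindex hk)
    · rw [coeff_charpoly_companionMatrix_of_lt _ hk]
      refine le_trans (b := 1) ?_ (by linarith)
      split_ifs <;> simp
  · rw [coeff_charpoly_jpMatrix b le_rfl, Nat.add_sub_cancel_left, Rat.cast_neg, norm_neg]
    obtain hk | hk := le_or_gt k m
    · rw [coeff_charpoly_jpMatrix b hk, Rat.cast_neg, norm_neg]
      exact h.norm_digit_lt hm (Finset.mem_Icc.2 ⟨by lia, by lia⟩)
    · rw [coeff_charpoly_companionMatrix_of_lt _ hk, h.norm_digit_first hm]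
      refine lt_of_le_of_lt ?_ (h.one_lt_norm_first hm)
      split_ifs <;> simp

theorem jpMatrix_mulVec (h : IsJPFixedPoint p m x b) :
    ((jpMatrix m b).map (algebraMap ℚ ℚ_[p])).mulVec (fun i => x (i + 1)) =
      x 1 • fun i : Fin (m + 1) => x (i + 1) := by
  ext i
  simp only [Matrix.mulVec, dotProduct, Fin.sum_univ_succ, Matrix.map_apply, companionMatrix_zero,
    companionMatrix_succ, Pi.smul_apply, smul_eq_mul]
  cases i using Fin.lastCases with
  | last => simp [h.digit_last, h.quotient_last, (Fin.castSucc_lt_last _).ne']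
  | cast i =>
    have hstep := h.step (i + 1) (Finset.mem_Icc.2 ⟨by lia, by lia⟩)
    simp only [Fin.val_castSucc, eq_ratCast, Fin.val_zero, zero_add, Fin.castSucc_inj,
      MonoidWithZeroHom.map_ite_one_zero, Fin.val_succ, ite_mul, one_mul, zero_mul,
      Finset.sum_ite_eq, Finset.mem_univ, if_true, hstep]
    ring

theorem aeval_charpoly_eq_zero (h : IsJPFixedPoint p m x b) :
    aeval (x 1) (jpMatrix m b).charpoly = 0 := by
  have hne : (fun i : Fin (m + 1) => x (i + 1)) ≠ 0 := fun h0 => by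
    simpa [h.quotient_last] using congrFun h0 (Fin.last m)
  exact aeval_charpoly_eq_zero_of_mulVec_eq_smul hne h.jpMatrix_mulVec

theorem quotient_mem_adjoin_first (h : IsJPFixedPoint p m x b) {i : ℕ} (hi : i ∈ Set.Icc 1 m) :
    x i ∈ IntermediateField.adjoin ℚ {x 1} := by
  have hx1 := IntermediateField.mem_adjoin_simple_self ℚ (x 1)
  obtain ⟨h1, him⟩ := hi
  induction i, h1 using Nat.le_induction with
  | base => exact hx1
  | succ i h1 ih =>
    rw [h.step i (Finset.mem_Icc.2 ⟨h1, by lia⟩)]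
    exact mul_mem (sub_mem (ih (by lia)) (SubfieldClass.ratCast_mem _ _)) hx1

theorem finrank_adjoin_quotients (h : IsJPFixedPoint p m x b) (hm : 1 ≤ m)
    (hirr : Irreducible (jpMatrix m b).charpoly) :
    Module.finrank ℚ (IntermediateField.adjoin ℚ (x '' Set.Icc 1 m)) = m + 1 := by
  have hadjoin : IntermediateField.adjoin ℚ (x '' Set.Icc 1 m) =
      IntermediateField.adjoin ℚ {x 1} := by
    apply le_antisymm
    · rw [IntermediateField.adjoin_le_iff]
      rintro _ ⟨i, hi, rfl⟩
      exact h.quotient_mem_adjoin_first hi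
    · exact IntermediateField.adjoin.mono _ _ _
        (Set.singleton_subset_iff.2 ⟨1, ⟨le_rfl, hm⟩, rfl⟩)
  have hmonic := (jpMatrix m b).charpoly_monic
  rw [hadjoin, IntermediateField.adjoin.finrank ⟨_, hmonic, h.aeval_charpoly_eq_zero⟩,
    ← minpoly.eq_of_irreducible_of_monic hirr h.aeval_charpoly_eq_zero hmonic,
    Matrix.charpoly_natDegree_eq_dim, Fintype.card_fin]

end IsJPFixedPoint

end JacobiPerron

theorem jacobiPerron_period_one_no_rational_root_general (p m : ℕ) [Fact p.Prime]
    (hm : 1 ≤ m)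
    (α : ℕ → ℕ → ℚ_[p]) (a : ℕ → ℕ → ℚ) (A : ℤ → ℕ → ℚ)
    (hrun : JPRun p m α a) (hconv : JPConv m a A)
    (hper : ∀ i ∈ Finset.Icc 1 m, α 1 i = α 0 i)
    (M : Matrix (Fin (m + 1)) (Fin (m + 1)) ℚ)
    (hM : ∀ i j : Fin (m + 1), M i j = A ((1 : ℤ) - ((j : ℕ) + 1)) ((i : ℕ) + 1)) :
    (∀ q : ℚ, ¬ (Matrix.charpoly M).IsRoot q) ∧
    (m = 2 → Irreducible (Matrix.charpoly M) ∧
      Module.finrank ℚ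
        (IntermediateField.adjoin ℚ ({α 0 1, α 0 2} : Set ℚ_[p])) = 3) := by
  have hfix := hrun.isJPFixedPoint hm hper
  have hnoroot := hfix.not_isRoot_charpoly hm
  rw [hconv.eq_jpMatrix hM]
  refine ⟨hnoroot, ?_⟩
  rintro rfl
  have hirr := irreducible_of_degree_le_three_of_not_isRoot
    (by simp [Matrix.charpoly_natDegree_eq_dim]) hnoroot
  have hgen : ({α 0 1, α 0 2} : Set ℚ_[p]) = Function.update (α 0) 3 1 '' Set.Icc 1 2 := by
    rw [show Set.Icc 1 2 = ({1, 2} : Set ℕ) by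
      ext
      simp only [Set.mem_Icc, Set.mem_insert_iff, Set.mem_singleton_iff]
      lia]
    simp [Set.image_pair]
  rw [hgen]
  exact ⟨hirr, hfix.finrank_adjoin_quotients hm hirr⟩

/-- For a purely periodic run of period `N = 1`, the characteristic polynomial
`P(X)` has no rational root; in particular, when `m = 2`, `P` is irreducible over `ℚ` and the
field `ℚ(α₀⁽¹⁾, α₀⁽²⁾)` has degree `3` over `ℚ`. -/
theorem jacobiPerron_period_one_no_rational_root (p m : ℕ) [hp : Fact p.Prime]
    (hp2 : 2 < p) (hm : 1 ≤ m)
    (α : ℕ → ℕ → ℚ_[p]) (a : ℕ → ℕ → ℚ) (A : ℤ → ℕ → ℚ)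
    (hrun : JPRun p m α a) (hconv : JPConv m a A)
    (hper : ∀ n : ℕ, ∀ i ∈ Finset.Icc 1 m, α (n + 1) i = α n i ∧ a (n + 1) i = a n i)
    (M : Matrix (Fin (m + 1)) (Fin (m + 1)) ℚ)
    (hM : ∀ i j : Fin (m + 1), M i j = A ((1 : ℤ) - ((j : ℕ) + 1)) ((i : ℕ) + 1)) :
    (∀ q : ℚ, ¬ (Matrix.charpoly M).IsRoot q) ∧
    (m = 2 → Irreducible (Matrix.charpoly M) ∧
      Module.finrank ℚ
        (IntermediateField.adjoin ℚ ({α 0 1, α 0 2} : Set ℚ_[p])) = 3) := by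
  exact jacobiPerron_period_one_no_rational_root_general p m hm α a A hrun hconv
    (fun i hi => (hper 0 i hi).1) M hM
end
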